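/- Let G be a finite Frobenius group with Frobenius kernel K and Frobenius complement H, and assume that H is not nilpotent and that every prime divisor of |H| is 2 or 3. Then G has perfect order classes if, and only if, for some positive integer k, G is isomorphic to one of: (1) C_{5^k}^2 ⋊ SL(2,3); (2) C_{5^k}^2 ⋊ (C_3 ⋊ C_8), where a generator of C_8 inverts C_3; (3) C_{7^k}^2 ⋊ (C_3 ⋊ C_{16}), where a generator of C_{16} inverts C_3; or (4) C_{17^k}^2 ⋊ (C_9 ⋊ C_{32}), where a generator of C_{32} inverts C_9 (each outer semidirect product having fixed-point-free action). -/

import Mathlib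

/-- The number of elements of order `n` in the group `G`. -/
noncomputable def orderCount (G : Type*) [Group G] (n : ℕ) : ℕ :=
  Nat.card {g : G // orderOf g = n}

/-- A group has *perfect order classes* if, for every positive integer `n`, the number of
elements of order `n` is either zero or a divisor of the order of the group. -/
def PerfectOrderClasses (G : Type*) [Group G] : Prop :=
  ∀ n : ℕ, 0 < n → orderCount G n = 0 ∨ orderCount G n ∣ Nat.card G

/-- `G` is a Frobenius group with Frobenius kernel `K` and Frobenius complement `H`:
`K` is a nontrivial proper normal subgroup, `H` a subgroup with `K ⊓ H = ⊥` and `KH = G`,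
and the conjugation action of `H` on `K` is fixed-point-free. -/
def IsFrobeniusWith {G : Type*} [Group G] (K H : Subgroup G) : Prop :=
  K ≠ ⊥ ∧ K ≠ ⊤ ∧ K.Normal ∧ K ⊓ H = ⊥ ∧
    (∀ g : G, ∃ k ∈ K, ∃ h ∈ H, g = k * h) ∧
    ∀ h ∈ H, h ≠ 1 → ∀ k ∈ K, k ≠ 1 → h * k * h⁻¹ ≠ k

/-- `G` is isomorphic to the outer semidirect product `N ⋊ C` for some
fixed-point-free action of `C` on `N` (i.e. a Frobenius semidirect product). -/
def IsoFrobSdp (G : Type*) [Group G] (N C : Type*) [Group N] [Group C] : Prop :=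
  ∃ φ : C →* MulAut N,
    (∀ h : C, h ≠ 1 → ∀ x : N, x ≠ 1 → φ h x ≠ x) ∧
      Nonempty (G ≃* SemidirectProduct N C φ)

/-- Relations of the metacyclic group `⟨a, b ∣ a^m = 1, b^n = 1, b⁻¹ a b = a^e⟩`,
with `a` the generator indexed by `true` and `b` the one indexed by `false`. -/
def metacyclicRels (m n : ℕ) (e : ℤ) : Set (FreeGroup Bool) :=
  {FreeGroup.of true ^ m, FreeGroup.of false ^ n,
    (FreeGroup.of false)⁻¹ * FreeGroup.of true * FreeGroup.of false *
      (FreeGroup.of true ^ e)⁻¹}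

/-- The metacyclic group `⟨a, b ∣ a^m = 1, b^n = 1, b⁻¹ a b = a^e⟩`. -/
abbrev Metacyclic (m n : ℕ) (e : ℤ) : Type := PresentedGroup (metacyclicRels m n e)

/-!
Since `H` is not nilpotent, `6` divides `|H|`, and an involution of `H` acts on `K` without fixed
points. It therefore inverts `K`, so `K` is abelian and the involution is the only one in `H`.
Every element of `G` outside `K` is conjugate to an element of `H`; hence, writing `f_n` for the
number of elements of order `n`, `G` has perfect order classes if and only if `H` has, and every
nonzero `f_n(K)` divides `|G|`. As `H` acts semiregularly on the elements of each order of `K`, this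
forces `K` to be a `p`-group on whose elements of order `p` the group `H` is transitive. So `K` is
homocyclic of rank `r` with `|H| = p ^ r - 1`. The `{2, 3}`-numbers of this form, with `p` coprime
to `6` and `r ≥ 2`, are `24`, `48` and `288`, for `r = 2` and `p = 5, 7, 17`.

A group of one of these orders with a unique involution has cyclic or generalised quaternion Sylow
`2`-subgroups. In the first case it is metacyclic. In the second, a Sylow `2`-subgroup of order `2N`
contains `N + 2` elements of order `4`, while the number of all such elements is congruent to `2`
modulo `4` and divides `|H|`; this leaves only the quaternion group of order `8` and
`H ≅ SL(2, 3)`.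
-/

/-! ### Numbers `p ^ r - 1` without prime divisors other than `2` and `3` -/

section TwoThreeFactored

open Nat (factoredNumbers)

lemma exists_eq_three_pow {n : ℕ} (hn : n ∈ factoredNumbers {2, 3}) (hodd : Odd n) :
    ∃ c, n = 3 ^ c := by
  refine ⟨_, Nat.eq_prime_pow_of_unique_prime_dvd hn.1 fun {d} hd hdn => ?_⟩
  have := Nat.mem_factoredNumbers'.mp hn d hd hdn
  rcases Finset.mem_insert.mp this with rfl | h
  · exact absurd hdn hodd.not_two_dvd_nat
  · exact Finset.mem_singleton.mp h

lemma exists_eq_two_pow {n : ℕ} (hn : n ∈ factoredNumbers {2, 3}) (h3 : ¬ 3 ∣ n) :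
    ∃ c, n = 2 ^ c := by
  refine ⟨_, Nat.eq_prime_pow_of_unique_prime_dvd hn.1 fun {d} hd hdn => ?_⟩
  have := Nat.mem_factoredNumbers'.mp hn d hd hdn
  rcases Finset.mem_insert.mp this with h | h
  · exact h
  · exact absurd (Finset.mem_singleton.mp h ▸ hdn) h3

lemma sq_add_one_notMem_factoredNumbers {p : ℕ} (hp : 1 < p) (hodd : Odd p) :
    p ^ 2 + 1 ∉ factoredNumbers {2, 3} := by
  intro h
  have h3 : ¬ 3 ∣ p ^ 2 + 1 := by
    rw [Nat.dvd_iff_mod_eq_zero, Nat.add_mod, Nat.pow_mod]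
    have : p % 3 < 3 := Nat.mod_lt _ (by norm_num)
    interval_cases p % 3 <;> simp
  obtain ⟨c, hc⟩ := exists_eq_two_pow h h3
  obtain ⟨w, rfl⟩ := hodd
  have hc2 : c < 2 := by
    by_contra! hle
    have h4 : 2 ^ 2 ∣ 2 ^ c := pow_dvd_pow 2 hle
    rw [← hc, show (2 * w + 1) ^ 2 + 1 = 4 * (w ^ 2 + w) + 2 by ring] at h4
    omega
  interval_cases c <;> nlinarith

lemma sq_add_self_add_one_notMem_factoredNumbers {p : ℕ} (hp : 1 < p) :
    p ^ 2 + p + 1 ∉ factoredNumbers {2, 3} := by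
  intro h
  have heven : Even (p ^ 2 + p) := by
    simpa only [sq, mul_add_one] using Nat.even_mul_succ_self p
  obtain ⟨c, hc⟩ := exists_eq_three_pow h heven.add_one
  have h9 : ¬ 9 ∣ p ^ 2 + p + 1 := by
    rw [Nat.dvd_iff_mod_eq_zero, Nat.add_mod, Nat.add_mod (p ^ 2), Nat.pow_mod]
    have : p % 9 < 9 := Nat.mod_lt _ (by norm_num)
    interval_cases p % 9 <;> simp
  have hc2 : c < 2 := by
    by_contra! hle
    exact h9 (hc ▸ pow_dvd_pow 3 hle)
  interval_cases c <;> nlinarith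

lemma geomSum_modEq_of_modEq_one {p n : ℕ} (h : p ≡ 1 [MOD n]) (t : ℕ) :
    ∑ i ∈ Finset.range t, p ^ i ≡ t [MOD n] := by
  have := Nat.ModEq.sum (s := Finset.range t) fun i _ => h.pow i
  simpa only [one_pow, Finset.sum_const, Finset.card_range, smul_eq_mul, mul_one] using this

lemma three_dvd_of_three_dvd_geomSum {p t : ℕ} (ht : Odd t)
    (h : 3 ∣ ∑ i ∈ Finset.range t, p ^ i) : 3 ∣ t := by
  have hmod : p ≡ 1 [MOD 3] := by
    have hz : (p : ZMod 3) ^ t = 1 := by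
      rw [← sub_eq_zero, ← geom_sum_mul]
      have : ((∑ i ∈ Finset.range t, p ^ i : ℕ) : ZMod 3) = 0 :=
        (ZMod.natCast_eq_zero_iff _ _).mpr h
      push_cast at this
      rw [this, zero_mul]
    obtain ⟨u, rfl⟩ := ht
    rw [pow_succ, pow_mul] at hz
    rw [← ZMod.natCast_eq_natCast_iff, Nat.cast_one]
    have hsq : ∀ x : ZMod 3, x ^ 2 = 0 ∨ x ^ 2 = 1 := by decide
    rcases hsq p with h0 | h1
    · have hp0 : (p : ZMod 3) = 0 := pow_eq_zero_iff two_ne_zero |>.mp h0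
      simp [hp0] at hz
    · rwa [h1, one_pow, one_mul] at hz
  exact ((geomSum_modEq_of_modEq_one hmod t).dvd_iff dvd_rfl).mp h

lemma geomSum_notMem_factoredNumbers {p t : ℕ} (hp : 1 < p) (hodd : Odd p) (ht : Odd t)
    (ht1 : 1 < t) : ∑ i ∈ Finset.range t, p ^ i ∉ factoredNumbers {2, 3} := by
  intro h
  have hsodd : Odd (∑ i ∈ Finset.range t, p ^ i) := by
    rw [Nat.odd_iff] at ht ⊢
    rw [← ht]
    exact geomSum_modEq_of_modEq_one (Nat.odd_iff.mp hodd) t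
  obtain ⟨c, hc⟩ := exists_eq_three_pow h hsodd
  have hs1 : 1 < ∑ i ∈ Finset.range t, p ^ i :=
    calc 1 < ∑ i ∈ Finset.range 2, p ^ i := by simp [Finset.sum_range_succ]; omega
      _ ≤ _ := Finset.sum_le_sum_of_subset (Finset.range_mono (by omega))
  have h3t : 3 ∣ t := three_dvd_of_three_dvd_geomSum ht <| hc ▸ dvd_pow_self 3 (by
    rintro rfl
    omega)
  -- `1 + p + p ^ 2` divides the geometric sum because `p ^ 3 - 1` divides `p ^ t - 1`.
  have hdvd : p ^ 2 + p + 1 ∣ ∑ i ∈ Finset.range t, p ^ i := by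
    obtain ⟨u, rfl⟩ := h3t
    refine Nat.dvd_of_mul_dvd_mul_right (Nat.sub_pos_of_lt hp) ?_
    rw [geom_sum_mul_of_one_le hp.le]
    have : (p ^ 2 + p + 1) * (p - 1) = p ^ 3 - 1 := by
      rw [← geom_sum_mul_of_one_le hp.le]
      simp only [Finset.sum_range_succ, Finset.sum_range_zero]
      ring
    simpa only [this, one_pow, pow_mul] using Nat.sub_dvd_pow_sub_pow (p ^ 3) 1 u
  exact sq_add_self_add_one_notMem_factoredNumbers hp (Nat.mem_factoredNumbers_of_dvd h hdvd)

lemma le_two_of_pow_sub_one_mem_factoredNumbers {p r : ℕ} (hp : 1 < p) (hodd : Odd p)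
    (hs : p ^ r - 1 ∈ factoredNumbers {2, 3}) : r ≤ 2 := by
  have hpow_dvd {d : ℕ} (hd : d ∣ r) : p ^ d - 1 ∣ p ^ r - 1 := by
    obtain ⟨u, rfl⟩ := hd
    simpa only [one_pow, ← pow_mul] using Nat.sub_dvd_pow_sub_pow (p ^ d) 1 u
  have hfour : ¬ 4 ∣ r := fun h4 => by
    refine sq_add_one_notMem_factoredNumbers hp hodd (Nat.mem_factoredNumbers_of_dvd hs ?_)
    exact Dvd.dvd.trans ⟨p ^ 2 - 1, by rw [← Nat.sq_sub_sq, ← pow_mul, one_pow]⟩ (hpow_dvd h4)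
  have hnodd {t : ℕ} (ht : Odd t) (htr : t ∣ r) : t ≤ 1 := by
    by_contra! ht1
    refine geomSum_notMem_factoredNumbers hp hodd ht ht1 (Nat.mem_factoredNumbers_of_dvd hs ?_)
    exact Dvd.dvd.trans ⟨p - 1, (geom_sum_mul_of_one_le hp.le t).symm⟩ (hpow_dvd htr)
  rcases Nat.even_or_odd' r with ⟨t, rfl | rfl⟩
  · rcases Nat.even_or_odd' t with ⟨u, rfl | rfl⟩
    · exact absurd ⟨u, by ring⟩ hfour
    · have := hnodd (odd_two_mul_add_one u) (dvd_mul_left _ _)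
      omega
  · exact (hnodd (odd_two_mul_add_one t) dvd_rfl).trans one_le_two

lemma le_two_of_three_pow_add_one_eq_two_pow {m x : ℕ} (h : 3 ^ x + 1 = 2 ^ m) : m ≤ 2 := by
  by_contra! hm
  have h8 : 2 ^ 3 ∣ 2 ^ m := pow_dvd_pow 2 hm
  have hmod : ∀ x, 3 ^ x % 8 = 1 ∨ 3 ^ x % 8 = 3 := fun x => by
    induction x with
    | zero => simp
    | succ n ih => rw [pow_succ]; omega
  have := hmod x
  omega

lemma le_two_of_two_pow_add_one_eq_three_pow {m x : ℕ} (h : 2 ^ m + 1 = 3 ^ x) : x ≤ 2 := by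
  rcases Nat.even_or_odd' x with ⟨u, rfl | rfl⟩
  · have hmul : (3 ^ u + 1) * (3 ^ u - 1) = 2 ^ m := by
      rw [← Nat.sq_sub_sq, ← pow_mul, mul_comm u, one_pow, ← h, Nat.add_sub_cancel]
    obtain ⟨c, -, hc⟩ := (Nat.dvd_prime_pow Nat.prime_two).mp (Dvd.intro _ hmul)
    have hc2 := le_two_of_three_pow_add_one_eq_two_pow hc
    have hu : 3 ^ u < 3 ^ 2 := by
      have := Nat.pow_le_pow_right two_pos hc2
      omega
    have := (Nat.pow_lt_pow_iff_right (by norm_num)).mp hu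
    omega
  · have hmod : 3 ^ (2 * u + 1) % 8 = 3 := by
      rw [pow_succ, pow_mul, Nat.mul_mod, Nat.pow_mod]
      norm_num
    have hm : m < 2 := by
      by_contra! hm
      have : 2 ^ 2 ∣ 2 ^ m := pow_dvd_pow 2 hm
      omega
    have hx : 3 ^ (2 * u + 1) < 3 ^ 2 := by
      rw [← h]
      interval_cases m <;> norm_num
    exact ((Nat.pow_lt_pow_iff_right (by norm_num)).mp hx).le

lemma eq_of_mul_succ_mem_factoredNumbers {w : ℕ} (hw : 1 < w)
    (hs : w * (w + 1) ∈ factoredNumbers {2, 3}) :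
    w = 2 ∨ w = 3 ∨ w = 8 := by
  have hs₁ := Nat.mem_factoredNumbers_of_dvd hs (dvd_mul_right w (w + 1))
  have hs₂ := Nat.mem_factoredNumbers_of_dvd hs (dvd_mul_left (w + 1) w)
  rcases Nat.even_or_odd w with heven | hodd
  · obtain ⟨x, hx⟩ := exists_eq_three_pow hs₂ heven.add_one
    have hx0 : x ≠ 0 := by rintro rfl; omega
    have h3w : 3 ∣ w + 1 := hx ▸ dvd_pow_self 3 hx0
    obtain ⟨m, hm⟩ := exists_eq_two_pow hs₁ (by omega)
    have := le_two_of_two_pow_add_one_eq_three_pow (hm ▸ hx)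
    interval_cases x <;> omega
  · obtain ⟨x, hx⟩ := exists_eq_three_pow hs₁ hodd
    have hx0 : x ≠ 0 := by rintro rfl; omega
    have h3w : 3 ∣ w := hx ▸ dvd_pow_self 3 hx0
    obtain ⟨m, hm⟩ := exists_eq_two_pow hs₂ (by omega)
    have := le_two_of_three_pow_add_one_eq_two_pow (hx ▸ hm)
    interval_cases m <;> omega

lemma eq_two_and_eq_of_pow_sub_one_mem_factoredNumbers {p r : ℕ} (hp : 3 < p) (hodd : Odd p)
    (hr : 2 ≤ r) (hs : p ^ r - 1 ∈ factoredNumbers {2, 3}) :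
    r = 2 ∧ (p = 5 ∨ p = 7 ∨ p = 17) := by
  obtain rfl : r = 2 :=
    (le_two_of_pow_sub_one_mem_factoredNumbers (by omega) hodd hs).antisymm hr
  obtain ⟨w, rfl⟩ := hodd
  have hfac : (2 * w + 1) ^ 2 - 1 = w * (w + 1) * 4 := by
    rw [Nat.sub_eq_iff_eq_add (Nat.one_le_pow _ _ (by omega))]
    ring
  have := eq_of_mul_succ_mem_factoredNumbers (by omega)
    (Nat.mem_factoredNumbers_of_dvd hs ⟨4, hfac⟩)
  omega

end TwoThreeFactored

/-! ### Counting elements by their order -/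

section OrderCount

variable {Γ : Type*} [Group Γ]

lemma orderCount_eq_zero {d : ℕ} (h : ¬ d ∣ Nat.card Γ) : orderCount Γ d = 0 :=
  have : IsEmpty {g : Γ // orderOf g = d} := ⟨fun x => h (x.2 ▸ orderOf_dvd_natCard x.1)⟩
  Nat.card_of_isEmpty

variable [Finite Γ]

lemma orderCount_eq_add (A : Subgroup Γ) (d : ℕ) :
    orderCount Γ d = orderCount A d + Nat.card {x : Γ // x ∉ A ∧ orderOf x = d} := by
  classical
  have hA : orderCount A d = Nat.card {x : Γ // x ∈ A ∧ orderOf x = d} :=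
    Nat.card_congr ⟨fun x => ⟨x.1, x.1.2, (Subgroup.orderOf_coe x.1).trans x.2⟩,
      fun x => ⟨⟨x.1, x.2.1⟩, (Subgroup.orderOf_mk x.1 x.2.1).trans x.2.2⟩,
      fun _ => rfl, fun _ => rfl⟩
  rw [hA, ← Nat.card_sum]
  refine Nat.card_congr (Equiv.trans (Equiv.subtypeEquivRight fun x => ?_)
    (subtypeOrEquiv _ _ (disjoint_iff_inf_le.mpr fun x hx => hx.2.1 hx.1.1)))
  tauto

lemma orderCount_subgroup_le (A : Subgroup Γ) (d : ℕ) : orderCount A d ≤ orderCount Γ d :=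
  (Nat.le_add_right _ _).trans (orderCount_eq_add A d).ge

lemma mem_of_orderCount_le {A : Subgroup Γ} {d : ℕ} (h : orderCount Γ d ≤ orderCount A d) {x : Γ}
    (hx : orderOf x = d) : x ∈ A := by
  by_contra hxA
  have : Nonempty {x : Γ // x ∉ A ∧ orderOf x = d} := ⟨⟨x, hxA, hx⟩⟩
  have := Nat.card_pos (α := {x : Γ // x ∉ A ∧ orderOf x = d})
  have := orderCount_eq_add A d
  omega

lemma orderCount_of_isCyclic [IsCyclic Γ] {d : ℕ} (h : d ∣ Nat.card Γ) :
    orderCount Γ d = d.totient := by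
  have := Fintype.ofFinite Γ
  rw [Nat.card_eq_fintype_card] at h
  rw [← IsCyclic.card_orderOf_eq_totient h, orderCount, Nat.card_eq_fintype_card,
    Fintype.card_subtype]

lemma natCard_notMem_of_index_eq_two {A : Subgroup Γ} (hA : A.index = 2) :
    Nat.card {x : Γ // x ∉ A} = Nat.card A := by
  have := Set.ncard_add_ncard_compl (A : Set Γ)
  rw [← A.card_mul_index, hA, mul_two] at this
  exact Nat.add_left_cancel this

lemma perfectOrderClasses_of_isCyclic_of_index_eq_two {A : Subgroup Γ} [IsCyclic A]
    (hA : A.index = 2) {n : ℕ} (hn : ∀ x ∉ A, orderOf x = n) (hnA : ¬ n ∣ Nat.card A)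
    (hφ : ∀ d, d ∣ Nat.card A → d.totient ∣ Nat.card Γ) : PerfectOrderClasses Γ := by
  intro d _
  rw [orderCount_eq_add A d]
  have hempty (hdn : d ≠ n) : Nat.card {x : Γ // x ∉ A ∧ orderOf x = d} = 0 :=
    have : IsEmpty {x : Γ // x ∉ A ∧ orderOf x = d} := ⟨fun x => hdn (hn x.1 x.2.1 ▸ x.2.2.symm)⟩
    Nat.card_of_isEmpty
  by_cases hd : d ∣ Nat.card A
  · rw [orderCount_of_isCyclic hd, hempty fun h => hnA (h ▸ hd)]
    exact Or.inr (hφ d hd)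
  · rw [orderCount_eq_zero hd, zero_add]
    rcases eq_or_ne d n with rfl | hdn
    · have hcongr : Nat.card {x : Γ // x ∉ A ∧ orderOf x = d} = Nat.card {x : Γ // x ∉ A} :=
        Nat.card_congr (Equiv.subtypeEquivRight fun x => and_iff_left_of_imp (hn x))
      rw [hcongr, natCard_notMem_of_index_eq_two hA]
      exact Or.inr (Subgroup.card_subgroup_dvd_card A)
    · exact Or.inl (hempty hdn)

end OrderCount

/-! ### Metacyclic groups -/

section Inverts

variable {Γ : Type*} [Group Γ] {a b : Γ}

lemma inv_mul_mul_eq_inv_iff_semiconjBy : b⁻¹ * a * b = a⁻¹ ↔ SemiconjBy b a a⁻¹ := by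
  rw [← SemiconjBy.inv_right_iff, inv_inv, SemiconjBy, mul_assoc, inv_mul_eq_iff_eq_mul, eq_comm]

lemma mul_zpow_of_semiconjBy_inv (h : SemiconjBy b a a⁻¹) (i : ℤ) :
    b * a ^ i = a ^ (-i) * b := by
  rw [zpow_neg, ← inv_zpow]
  exact h.zpow_right i

lemma sq_zpow_mul_of_semiconjBy_zpow {s : ℤ} (h : SemiconjBy b a (a ^ s)) (i : ℤ) :
    (a ^ i * b) ^ 2 = a ^ (i + s * i) * b ^ 2 := by
  have hi : b * a ^ i = a ^ (s * i) * b := by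
    rw [zpow_mul]
    exact h.zpow_right i
  rw [sq, mul_assoc, ← mul_assoc b, hi, mul_assoc, ← mul_assoc, ← zpow_add, sq]

lemma exists_zpow_mul_zpow_of_mem_closure (h : SemiconjBy b a a⁻¹) {x : Γ}
    (hx : x ∈ Subgroup.closure {a, b}) : ∃ i j : ℤ, x = a ^ i * b ^ j := by
  induction hx using Subgroup.closure_induction_left with
  | one => exact ⟨0, 0, by simp⟩
  | mul_left y hy x _ ih =>
    obtain ⟨i, j, rfl⟩ := ih
    rcases hy with rfl | rfl
    · exact ⟨1 + i, j, by rw [zpow_one_add, mul_assoc]⟩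
    · exact ⟨-i, 1 + j, by
        rw [← mul_assoc, mul_zpow_of_semiconjBy_inv h, mul_assoc, zpow_one_add]⟩
  | inv_mul_cancel y hy x _ ih =>
    obtain ⟨i, j, rfl⟩ := ih
    rcases hy with rfl | rfl
    · exact ⟨-1 + i, j, by rw [zpow_add, zpow_neg_one, mul_assoc]⟩
    · refine ⟨-i, -1 + j, ?_⟩
      rw [inv_mul_eq_iff_eq_mul, ← mul_assoc, mul_zpow_of_semiconjBy_inv h, neg_neg, zpow_add,
        zpow_neg_one, mul_assoc, mul_inv_cancel_left]

lemma commute_sq_of_semiconjBy_inv (h : SemiconjBy b a a⁻¹) : Commute (b ^ 2) a := by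
  have := h.inv_right.mul_left h
  rwa [inv_inv, ← sq] at this

lemma semiconjBy_zpow_of_odd (h : SemiconjBy b a a⁻¹) {j : ℤ} (hj : Odd j) :
    SemiconjBy (b ^ j) a a⁻¹ := by
  obtain ⟨l, rfl⟩ := hj
  have := ((commute_sq_of_semiconjBy_inv h).zpow_left l).inv_right.semiconjBy.mul_left h
  rwa [← zpow_natCast, ← zpow_mul, ← zpow_add_one] at this

lemma sq_zpow_mul_of_semiconjBy_inv (h : SemiconjBy b a a⁻¹) (i : ℤ) :
    (a ^ i * b) ^ 2 = b ^ 2 := by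
  have := sq_zpow_mul_of_semiconjBy_zpow (s := -1) ((zpow_neg_one a).symm ▸ h) i
  rwa [neg_one_mul, add_neg_cancel, zpow_zero, one_mul] at this

lemma orderOf_zpow_of_isCoprime {j : ℤ} (hj : IsCoprime j (orderOf b)) :
    orderOf (b ^ j) = orderOf b :=
  (orderOf_dvd_of_mem_zpowers ⟨j, rfl⟩).antisymm <| orderOf_dvd_of_mem_zpowers <|
    mem_zpowers_zpow_iff.mpr (Int.isCoprime_iff_gcd_eq_one.mp hj)

lemma orderOf_zpow_mul_zpow_of_odd (h : SemiconjBy b a a⁻¹) {k : ℕ}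
    (hb : orderOf b = 2 ^ (k + 2)) (i : ℤ) {j : ℤ} (hj : Odd j) :
    orderOf (a ^ i * b ^ j) = 2 ^ (k + 2) := by
  have hsq := sq_zpow_mul_of_semiconjBy_inv (semiconjBy_zpow_of_odd h hj) i
  have hpow (l : ℕ) : (a ^ i * b ^ j) ^ 2 ^ (l + 1) = (b ^ j) ^ 2 ^ (l + 1) := by
    rw [pow_succ', pow_mul, pow_mul, hsq]
  have hbj : orderOf (b ^ j) = 2 ^ (k + 2) := by
    rw [← hb, orderOf_zpow_of_isCoprime]
    rw [hb]
    exact_mod_cast (Int.isCoprime_two_right.mpr hj).pow_right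
  have : Fact (Nat.Prime 2) := ⟨Nat.prime_two⟩
  refine orderOf_eq_prime_pow ?_ ?_
  · rw [hpow, ← orderOf_dvd_iff_pow_eq_one, hbj, Nat.pow_dvd_pow_iff_le_right one_lt_two]
    omega
  · rw [hpow, ← orderOf_dvd_iff_pow_eq_one, hbj]

lemma mem_zpowers_mul_of_coprime (h : Commute a b) (hab : (orderOf a).Coprime (orderOf b)) :
    a ∈ Subgroup.zpowers (a * b) := by
  have hpow : a ^ orderOf b ∈ Subgroup.zpowers (a * b) := by
    have := Subgroup.npow_mem_zpowers (a * b) (orderOf b)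
    rwa [h.mul_pow, pow_orderOf_eq_one, mul_one] at this
  exact Subgroup.zpowers_le.mpr hpow (mem_zpowers_pow_iff.mpr hab.symm)

end Inverts

namespace Metacyclic

/-- The generator of a metacyclic group that spans the normal cyclic subgroup. -/
def genA (m n : ℕ) (e : ℤ) : Metacyclic m n e := PresentedGroup.of true

/-- The generator of a metacyclic group that acts on the normal cyclic subgroup. -/
def genB (m n : ℕ) (e : ℤ) : Metacyclic m n e := PresentedGroup.of false

section Lift

variable {m n : ℕ} {e : ℤ}

lemma genA_pow : genA m n e ^ m = 1 :=
  PresentedGroup.one_of_mem (rels := metacyclicRels m n e) (x := FreeGroup.of true ^ m)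
    (by simp [metacyclicRels])

lemma genB_pow : genB m n e ^ n = 1 :=
  PresentedGroup.one_of_mem (rels := metacyclicRels m n e) (x := FreeGroup.of false ^ n)
    (by simp [metacyclicRels])

lemma genB_conj_genA : (genB m n e)⁻¹ * genA m n e * genB m n e = genA m n e ^ e :=
  mul_inv_eq_one.mp <| PresentedGroup.one_of_mem (rels := metacyclicRels m n e)
    (x := (FreeGroup.of false)⁻¹ * FreeGroup.of true * FreeGroup.of false *
      (FreeGroup.of true ^ e)⁻¹)
    (by simp [metacyclicRels])

lemma closure_gens : Subgroup.closure {genA m n e, genB m n e} = ⊤ := by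
  rw [← PresentedGroup.closure_range_of (metacyclicRels m n e)]
  congr 1
  ext x
  simp [genA, genB, or_comm]

variable {Γ : Type*} [Group Γ] {a b : Γ}

/-- The homomorphism out of a metacyclic group given by two elements satisfying its relations. -/
def lift (ha : a ^ m = 1) (hb : b ^ n = 1) (h : b⁻¹ * a * b = a ^ e) : Metacyclic m n e →* Γ :=
  PresentedGroup.toGroup (f := fun t => bif t then a else b) (by
    rintro r (rfl | rfl | rfl)
    · simp [ha]
    · simp [hb]
    · simp [h])

lemma lift_genA (ha : a ^ m = 1) (hb : b ^ n = 1) (h : b⁻¹ * a * b = a ^ e) :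
    lift ha hb h (genA m n e) = a := by
  simp [lift, genA]

lemma lift_genB (ha : a ^ m = 1) (hb : b ^ n = 1) (h : b⁻¹ * a * b = a ^ e) :
    lift ha hb h (genB m n e) = b := by
  simp [lift, genB]

end Lift

section Inverting

variable {m n : ℕ}

lemma semiconjBy_genB_genA :
    SemiconjBy (genB m n (-1)) (genA m n (-1)) (genA m n (-1))⁻¹ :=
  inv_mul_mul_eq_inv_iff_semiconjBy.mp (by rw [genB_conj_genA, zpow_neg_one])

lemma exists_eq_zpow_mul_zpow (x : Metacyclic m n (-1)) :
    ∃ i j : ℤ, x = genA m n (-1) ^ i * genB m n (-1) ^ j :=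
  exists_zpow_mul_zpow_of_mem_closure semiconjBy_genB_genA (closure_gens ▸ Subgroup.mem_top x)

lemma finite_and_card_le (hm : 0 < m) (hn : 0 < n) :
    Finite (Metacyclic m n (-1)) ∧ Nat.card (Metacyclic m n (-1)) ≤ m * n := by
  have hA := genA_pow (m := m) (n := n) (e := -1)
  have hB := genB_pow (m := m) (n := n) (e := -1)
  have : Finite (Subgroup.zpowers (genA m n (-1))) :=
    (isOfFinOrder_iff_pow_eq_one.mpr ⟨m, hm, hA⟩).finite_zpowers
  have : Finite (Subgroup.zpowers (genB m n (-1))) :=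
    (isOfFinOrder_iff_pow_eq_one.mpr ⟨n, hn, hB⟩).finite_zpowers
  let f : Subgroup.zpowers (genA m n (-1)) × Subgroup.zpowers (genB m n (-1)) →
    Metacyclic m n (-1) := fun x => x.1 * x.2
  have hf : Function.Surjective f := fun x => by
    obtain ⟨i, j, rfl⟩ := exists_eq_zpow_mul_zpow x
    exact ⟨⟨⟨_, i, rfl⟩, ⟨_, j, rfl⟩⟩, rfl⟩
  refine ⟨Finite.of_surjective f hf, (Nat.card_le_card_of_surjective f hf).trans ?_⟩
  rw [Nat.card_prod, Nat.card_zpowers, Nat.card_zpowers]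
  exact Nat.mul_le_mul (orderOf_le_of_pow_eq_one hm hA) (orderOf_le_of_pow_eq_one hn hB)

-- The orders are detected in the quotient `DihedralGroup m × ZMod n`.
lemma orderOf_gens (hn : Even n) :
    orderOf (genA m n (-1)) = m ∧ orderOf (genB m n (-1)) = n := by
  let a : DihedralGroup m × Multiplicative (ZMod n) := (DihedralGroup.r 1, 1)
  let b : DihedralGroup m × Multiplicative (ZMod n) :=
    (DihedralGroup.sr 0, Multiplicative.ofAdd 1)
  have ha : a ^ m = 1 := by simp [a, Prod.pow_mk, Prod.mk_eq_one]
  have hb : b ^ n = 1 := by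
    obtain ⟨k, rfl⟩ := hn
    simp only [b, Prod.pow_mk, Prod.mk_eq_one]
    refine ⟨?_, ?_⟩
    · rw [← two_mul, pow_mul, DihedralGroup.sr_mul_self 0 |> (sq _).trans, one_pow]
    · rw [← ofAdd_nsmul, nsmul_one, ZMod.natCast_self, ofAdd_zero]
  have hab : b⁻¹ * a * b = a ^ (-1 : ℤ) := by
    ext <;> simp [a, b]
  have hmapA := orderOf_map_dvd (lift ha hb hab) (genA m n (-1))
  have hmapB := orderOf_map_dvd (lift ha hb hab) (genB m n (-1))
  rw [lift_genA, Prod.orderOf_mk, DihedralGroup.orderOf_r_one] at hmapA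
  rw [lift_genB, Prod.orderOf_mk, orderOf_ofAdd_eq_addOrderOf, ZMod.addOrderOf_one] at hmapB
  exact ⟨(orderOf_dvd_of_pow_eq_one genA_pow).antisymm ((Nat.dvd_lcm_left _ _).trans hmapA),
    (orderOf_dvd_of_pow_eq_one genB_pow).antisymm ((Nat.dvd_lcm_right _ _).trans hmapB)⟩

lemma card_eq (hm : 0 < m) (hn : 0 < n) (heven : Even n) (hmn : m.Coprime n) :
    Nat.card (Metacyclic m n (-1)) = m * n := by
  obtain ⟨hfin, hle⟩ := finite_and_card_le hm hn
  obtain ⟨hA, hB⟩ := orderOf_gens (m := m) heven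
  refine hle.antisymm (Nat.le_of_dvd Nat.card_pos (hmn.mul_dvd_of_dvd_of_dvd ?_ ?_))
  · simpa only [hA] using orderOf_dvd_natCard (genA m n (-1))
  · simpa only [hB] using orderOf_dvd_natCard (genB m n (-1))

lemma nonempty_mulEquiv {Γ : Type*} [Group Γ] {a b : Γ} (hm : 0 < m) (hn : 0 < n)
    (ha : a ^ m = 1) (hb : b ^ n = 1) (h : SemiconjBy b a a⁻¹)
    (hgen : Subgroup.closure {a, b} = ⊤) (hcard : Nat.card Γ = m * n) :
    Nonempty (Γ ≃* Metacyclic m n (-1)) := by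
  obtain ⟨hfin, hle⟩ := finite_and_card_le hm hn
  let f := lift (e := -1) ha hb (by rw [inv_mul_mul_eq_inv_iff_semiconjBy.mpr h, zpow_neg_one])
  have hf : Function.Surjective f := by
    rw [← MonoidHom.range_eq_top, ← top_le_iff, ← hgen, Subgroup.closure_le]
    rintro x (rfl | rfl)
    · exact ⟨_, lift_genA ..⟩
    · exact ⟨_, lift_genB ..⟩
  have hcard' : Nat.card (Metacyclic m n (-1)) = Nat.card Γ :=
    (hle.trans hcard.ge).antisymm (Nat.card_le_card_of_surjective f hf)
  exact ⟨(MulEquiv.ofBijective f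
    ((Nat.bijective_iff_surjective_and_card f).mpr ⟨hf, hcard'⟩)).symm⟩

end Inverting

section PerfectOrderClasses

variable {m k : ℕ}

lemma exists_isCyclic_index_two (hm : Odd m) :
    ∃ A : Subgroup (Metacyclic m (2 ^ (k + 2)) (-1)), IsCyclic A ∧
      Nat.card A = m * 2 ^ (k + 1) ∧ A.index = 2 ∧ ∀ x ∉ A, orderOf x = 2 ^ (k + 2) := by
  have heven : Even (2 ^ (k + 2)) := even_two.pow_of_ne_zero (by omega)
  have hcop (l : ℕ) : (2 ^ l).Coprime m := (Nat.coprime_two_left.mpr hm).pow_left l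
  obtain ⟨hA, hB⟩ := orderOf_gens (m := m) heven
  have hinv := semiconjBy_genB_genA (m := m) (n := 2 ^ (k + 2))
  have hcomm := commute_sq_of_semiconjBy_inv hinv
  set a := genA m (2 ^ (k + 2)) (-1)
  set b := genB m (2 ^ (k + 2)) (-1)
  have hB2 : orderOf (b ^ 2) = 2 ^ (k + 1) := by
    rw [orderOf_pow_of_dvd two_ne_zero (by rw [hB]; exact dvd_pow_self 2 (by omega)), hB,
      pow_succ 2 (k + 1),
      Nat.mul_div_cancel _ two_pos]
  have hcard : Nat.card (Subgroup.zpowers (b ^ 2 * a)) = m * 2 ^ (k + 1) := by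
    rw [Nat.card_zpowers, hcomm.orderOf_mul_eq_mul_orderOf_of_coprime
      (by rw [hA, hB2]; exact hcop _), hA, hB2, mul_comm]
  have hb : b ^ 2 ∈ Subgroup.zpowers (b ^ 2 * a) :=
    mem_zpowers_mul_of_coprime hcomm (by rw [hA, hB2]; exact hcop _)
  have ha : a ∈ Subgroup.zpowers (b ^ 2 * a) :=
    (Subgroup.mul_mem_cancel_left _ hb).mp (Subgroup.mem_zpowers _)
  refine ⟨Subgroup.zpowers (b ^ 2 * a), inferInstance, hcard, ?_, fun x hx => ?_⟩
  · have := (Subgroup.zpowers (b ^ 2 * a)).card_mul_index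
    rw [hcard, card_eq hm.pos (by positivity) heven (hcop _).symm] at this
    exact Nat.eq_of_mul_eq_mul_left (Nat.mul_pos hm.pos (by positivity))
      (this.trans (by rw [mul_assoc, ← pow_succ]))
  · obtain ⟨i, j, rfl⟩ := exists_eq_zpow_mul_zpow x
    rcases Int.even_or_odd' j with ⟨l, rfl | rfl⟩
    · refine absurd (mul_mem (zpow_mem ha i) ?_) hx
      rw [zpow_mul]
      exact zpow_mem (by exact_mod_cast hb) l
    · exact orderOf_zpow_mul_zpow_of_odd hinv hB i (odd_two_mul_add_one l)

lemma perfectOrderClasses (hm : Odd m)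
    (hφ : ∀ d, d ∣ m * 2 ^ (k + 1) → d.totient ∣ m * 2 ^ (k + 2)) :
    PerfectOrderClasses (Metacyclic m (2 ^ (k + 2)) (-1)) := by
  obtain ⟨hfin, -⟩ := finite_and_card_le hm.pos (n := 2 ^ (k + 2)) (by positivity)
  obtain ⟨A, hcyc, hA, hindex, hord⟩ := exists_isCyclic_index_two (k := k) hm
  have hcard : Nat.card (Metacyclic m (2 ^ (k + 2)) (-1)) = m * 2 ^ (k + 2) := by
    rw [← A.card_mul_index, hA, hindex, mul_assoc, ← pow_succ]
  refine perfectOrderClasses_of_isCyclic_of_index_eq_two hindex hord (fun h => ?_)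
    (by rwa [hA, hcard])
  rw [hA, pow_succ' 2 (k + 1)] at h
  exact hm.not_two_dvd_nat (Nat.dvd_of_mul_dvd_mul_right (by positivity) h)

end PerfectOrderClasses

end Metacyclic

/-! ### The group `SL(2, 3)` -/

section SLTwoThree

open Pointwise

section Relations

variable {Γ : Type*} [Group Γ] {i j a : Γ}

lemma closure_pair_subset_of_sq_eq_sq (hj : j ^ 2 = i ^ 2) (hji : SemiconjBy j i i⁻¹) :
    (Subgroup.closure {i, j} : Set Γ) ⊆ (Subgroup.zpowers i : Set Γ) * {1, j} := by
  intro x hx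
  obtain ⟨u, v, rfl⟩ := exists_zpow_mul_zpow_of_mem_closure hji hx
  rcases Int.even_or_odd' v with ⟨l, rfl | rfl⟩
  · refine ⟨i ^ (u + 2 * l), ⟨_, rfl⟩, 1, by simp, ?_⟩
    change _ * _ = _
    rw [mul_one, zpow_add, zpow_mul, zpow_mul, zpow_ofNat, zpow_ofNat, hj]
  · refine ⟨i ^ (u + 2 * l), ⟨_, rfl⟩, j, by simp, ?_⟩
    change _ * _ = _
    rw [zpow_add_one, zpow_add, zpow_mul, zpow_mul, zpow_ofNat, zpow_ofNat, hj, mul_assoc]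

lemma closure_pair_subset_of_pow_three (hai : SemiconjBy a i j) (haj : SemiconjBy a j (i * j))
    (ha : a ^ 3 = 1) : (Subgroup.closure {i, a} : Set Γ) ⊆
      (Subgroup.closure {i, j} : Set Γ) * (Subgroup.zpowers a : Set Γ) := by
  have hi : i ∈ Subgroup.closure {i, j} := Subgroup.subset_closure (by simp)
  have hj : j ∈ Subgroup.closure {i, j} := Subgroup.subset_closure (by simp)
  have hconj : Subgroup.closure {i, j} ≤
      (Subgroup.closure {i, j}).comap (MulAut.conj a).toMonoidHom := by
    rw [Subgroup.closure_le]
    rintro x (rfl | rfl)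
    · change a * x * a⁻¹ ∈ Subgroup.closure {x, j}
      rwa [mul_inv_eq_of_eq_mul hai.eq]
    · change a * x * a⁻¹ ∈ Subgroup.closure {i, x}
      rw [mul_inv_eq_of_eq_mul haj.eq]
      exact mul_mem hi hj
  have hstep : ∀ x ∈ (Subgroup.closure {i, j} : Set Γ) * (Subgroup.zpowers a : Set Γ),
      a * x ∈ (Subgroup.closure {i, j} : Set Γ) * (Subgroup.zpowers a : Set Γ) := by
    rintro _ ⟨q, hq, c, hc, rfl⟩
    exact ⟨a * q * a⁻¹, hconj hq, a * c, mul_mem (Subgroup.mem_zpowers a) hc, by group⟩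
  intro x hx
  induction hx using Subgroup.closure_induction_left with
  | one => exact ⟨1, one_mem _, 1, one_mem _, one_mul 1⟩
  | mul_left y hy x _ ih =>
    rcases hy with rfl | rfl
    · obtain ⟨q, hq, c, hc, rfl⟩ := ih
      exact ⟨y * q, mul_mem hi hq, c, hc, mul_assoc ..⟩
    · exact hstep x ih
  | inv_mul_cancel y hy x _ ih =>
    rcases hy with rfl | rfl
    · obtain ⟨q, hq, c, hc, rfl⟩ := ih
      exact ⟨y⁻¹ * q, mul_mem (inv_mem hi) hq, c, hc, mul_assoc ..⟩
    · rw [inv_eq_of_mul_eq_one_right (b := y * y) (by rw [← ha, pow_succ', sq]), mul_assoc]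
      exact hstep _ (hstep _ ih)

lemma natCard_closure_pair_le_twentyFour [Finite Γ] (hi : i ^ 4 = 1) (hj : j ^ 2 = i ^ 2)
    (hji : SemiconjBy j i i⁻¹) (hai : SemiconjBy a i j) (haj : SemiconjBy a j (i * j))
    (ha : a ^ 3 = 1) : Nat.card (Subgroup.closure {i, a}) ≤ 24 := by
  have hcard_i : Nat.card (Subgroup.zpowers i) ≤ 4 :=
    (Nat.card_zpowers i).trans_le (orderOf_le_of_pow_eq_one (by norm_num) hi)
  have hcard_a : Nat.card (Subgroup.zpowers a) ≤ 3 :=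
    (Nat.card_zpowers a).trans_le (orderOf_le_of_pow_eq_one (by norm_num) ha)
  calc Nat.card (Subgroup.closure {i, a})
      ≤ Nat.card (Subgroup.closure {i, j}) * Nat.card (Subgroup.zpowers a) :=
        (Nat.card_mono (Set.toFinite _) (closure_pair_subset_of_pow_three hai haj ha)).trans
          Set.natCard_mul_le
    _ ≤ Nat.card (Subgroup.zpowers i) * Nat.card ({1, j} : Set Γ) * Nat.card (Subgroup.zpowers a) :=
        Nat.mul_le_mul_right _ <|
          (Nat.card_mono (Set.toFinite _) (closure_pair_subset_of_sq_eq_sq hj hji)).trans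
            Set.natCard_mul_le
    _ ≤ 4 * 2 * 3 := by
        gcongr
        exact (Set.ncard_insert_le 1 {j}).trans_eq (by rw [Set.ncard_singleton])

end Relations

lemma bijective_comp_subtype_of_map_eq_top {A B : Type*} [Group A] [Group B] {T : Subgroup A}
    [Finite T] (f : A →* B) (hf : T.map f = ⊤) (hT : Nat.card T ≤ Nat.card B) :
    Function.Bijective (f.comp T.subtype) := by
  have hsurj : Function.Surjective (f.comp T.subtype) := by
    rw [← MonoidHom.range_eq_top, MonoidHom.range_comp, Subgroup.range_subtype, hf]
  exact (Nat.bijective_iff_surjective_and_card _).mpr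
    ⟨hsurj, hT.antisymm (Nat.card_le_card_of_surjective _ hsurj)⟩

lemma nonempty_mulEquiv_of_subgroup_prod {A B : Type*} [Group A] [Group B] {T : Subgroup (A × B)}
    [Finite T] (hA : Nat.card T ≤ Nat.card A) (hB : Nat.card T ≤ Nat.card B)
    (hfst : T.map (MonoidHom.fst A B) = ⊤) (hsnd : T.map (MonoidHom.snd A B) = ⊤) :
    Nonempty (A ≃* B) :=
  ⟨(MulEquiv.ofBijective _ (bijective_comp_subtype_of_map_eq_top _ hfst hA)).symm.trans
    (MulEquiv.ofBijective _ (bijective_comp_subtype_of_map_eq_top _ hsnd hB))⟩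

namespace SLTwoThree

open Matrix

lemma card_eq : Nat.card (SpecialLinearGroup (Fin 2) (ZMod 3)) = 24 := by
  rw [Nat.card_eq_fintype_card]
  decide +kernel

/-- An element of order `4` of `SL(2, 3)`. -/
def quarter : SpecialLinearGroup (Fin 2) (ZMod 3) := ⟨!![0, -1; 1, 0], by decide +kernel⟩

/-- An element of order `3` of `SL(2, 3)`. -/
def shear : SpecialLinearGroup (Fin 2) (ZMod 3) := ⟨!![1, 1; 0, 1], by decide +kernel⟩

/-- The conjugate of `quarter` by `shear`. -/
def quarter' : SpecialLinearGroup (Fin 2) (ZMod 3) := shear * quarter * shear ^ 2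

lemma relations : quarter ^ 4 = 1 ∧ quarter' ^ 2 = quarter ^ 2 ∧
    quarter' * quarter = quarter⁻¹ * quarter' ∧ shear * quarter = quarter' * shear ∧
    shear * quarter' = quarter * quarter' * shear ∧ shear ^ 3 = 1 := by
  decide +kernel

lemma exists_eq_pow_mul_pow_mul_pow : ∀ x : SpecialLinearGroup (Fin 2) (ZMod 3),
    ∃ u : Fin 4, ∃ t : Fin 2, ∃ v : Fin 3,
      x = quarter ^ (u : ℕ) * (shear * quarter * shear ^ 2) ^ (t : ℕ) * shear ^ (v : ℕ) := by
  decide +kernel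

lemma closure_gens : Subgroup.closure {quarter, shear} = ⊤ := by
  rw [eq_top_iff]
  rintro x -
  obtain ⟨u, t, v, rfl⟩ := exists_eq_pow_mul_pow_mul_pow x
  have hquarter : quarter ∈ Subgroup.closure {quarter, shear} := Subgroup.subset_closure (by simp)
  have hshear : shear ∈ Subgroup.closure {quarter, shear} := Subgroup.subset_closure (by simp)
  exact mul_mem (mul_mem (pow_mem hquarter _)
    (pow_mem (mul_mem (mul_mem hshear hquarter) (pow_mem hshear _)) _)) (pow_mem hshear _)

-- `Γ` and `SL(2, 3)` are both quotients of the subgroup of `Γ × SL(2, 3)` generated by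
-- `(i, quarter)` and `(a, shear)`, whose order is at most `24` by the relations.
lemma nonempty_mulEquiv {Γ : Type*} [Group Γ] [Finite Γ] (hcard : Nat.card Γ = 24) {i j a : Γ}
    (hi : i ^ 4 = 1) (hj : j ^ 2 = i ^ 2) (hji : SemiconjBy j i i⁻¹) (hai : SemiconjBy a i j)
    (haj : SemiconjBy a j (i * j)) (ha : a ^ 3 = 1) (hgen : Subgroup.closure {i, a} = ⊤) :
    Nonempty (Γ ≃* SpecialLinearGroup (Fin 2) (ZMod 3)) := by
  obtain ⟨h₁, h₂, h₃, h₄, h₅, h₆⟩ := relations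
  have hle : Nat.card (Subgroup.closure
      {((i, quarter) : Γ × SpecialLinearGroup (Fin 2) (ZMod 3)), (a, shear)}) ≤ 24 :=
    natCard_closure_pair_le_twentyFour (j := (j, quarter')) (Prod.ext hi h₁) (Prod.ext hj h₂)
      (Prod.ext hji h₃) (Prod.ext hai h₄) (Prod.ext haj h₅) (Prod.ext ha h₆)
  refine nonempty_mulEquiv_of_subgroup_prod (hle.trans_eq hcard.symm)
    (hle.trans_eq card_eq.symm) ?_ ?_
  · rw [MonoidHom.map_closure, Set.image_pair]
    exact hgen
  · rw [MonoidHom.map_closure, Set.image_pair]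
    exact closure_gens

lemma card_filter_orderOf_eq : ∀ n ∈ Nat.divisors 12,
    (Finset.univ.filter fun g : SpecialLinearGroup (Fin 2) (ZMod 3) =>
      g ^ n = 1 ∧ ∀ m, m < n → 0 < m → g ^ m ≠ 1).card ∈ ({0, 1, 6, 8} : Finset ℕ) := by
  decide +kernel

lemma perfectOrderClasses : PerfectOrderClasses (SpecialLinearGroup (Fin 2) (ZMod 3)) := by
  intro n hn
  have hexp : ∀ g : SpecialLinearGroup (Fin 2) (ZMod 3), g ^ 12 = 1 := by decide +kernel
  by_cases hn12 : n ∣ 12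
  · rw [card_eq, orderCount, Nat.card_congr (Equiv.subtypeEquivRight fun g =>
      orderOf_eq_iff (x := g) hn), Nat.card_eq_fintype_card, Fintype.card_subtype]
    have hdvd : ∀ c ∈ ({0, 1, 6, 8} : Finset ℕ), c = 0 ∨ c ∣ 24 := by decide
    exact hdvd _ (card_filter_orderOf_eq n (by simpa using hn12))
  · left
    have : IsEmpty {g : SpecialLinearGroup (Fin 2) (ZMod 3) // orderOf g = n} :=
      ⟨fun g => hn12 (g.2 ▸ orderOf_dvd_of_pow_eq_one (hexp g.1))⟩
    exact Nat.card_of_isEmpty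

end SLTwoThree

end SLTwoThree

/-! ### Groups with a unique involution -/

section PGroup

variable {Γ : Type*} [Group Γ] [Finite Γ] {p : ℕ} [Fact p.Prime]

lemma exists_mem_center_orderOf_eq_prime (hΓ : IsPGroup p Γ) {N : Subgroup Γ} [N.Normal]
    (hN : N ≠ ⊥) : ∃ x ∈ N, x ∈ Subgroup.center Γ ∧ orderOf x = p := by
  have : Nontrivial N := N.nontrivial_iff_ne_bot.mpr hN
  let _ : MulAction Γ N := MulAction.compHom N (MulAut.conjNormal : Γ →* MulAut N)
  have hdvd : p ∣ Nat.card N :=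
    (hΓ.to_subgroup N).card_eq_or_dvd.resolve_left Finite.one_lt_card.ne'
  obtain ⟨b, hb, hb1⟩ := hΓ.exists_fixed_point_of_prime_dvd_card_of_fixed_point N hdvd (a := 1)
    fun g => map_one (MulAut.conjNormal g)
  have hbc : (b : Γ) ∈ N ⊓ Subgroup.center Γ := by
    refine ⟨b.2, Subgroup.mem_center_iff.mpr fun g => ?_⟩
    have := congrArg Subtype.val (hb g)
    exact mul_inv_eq_iff_eq_mul.mp ((MulAut.conjNormal_apply g b).symm.trans this)
  have hcard : p ∣ Nat.card (N ⊓ Subgroup.center Γ : Subgroup Γ) := by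
    refine (hΓ.to_subgroup _).card_eq_or_dvd.resolve_left fun h => hb1 ?_
    rw [Subgroup.card_eq_one] at h
    rw [h, Subgroup.mem_bot] at hbc
    exact (Subtype.ext hbc).symm
  obtain ⟨x, hx⟩ := exists_prime_orderOf_dvd_card' p hcard
  exact ⟨x, x.2.1, x.2.2, (Subgroup.orderOf_coe x).trans hx⟩

lemma exists_mem_notMem_pow_mem_of_lt (hΓ : IsPGroup p Γ) {A C : Subgroup Γ} [A.Normal]
    [C.Normal] (hAC : A < C) :
    ∃ b ∈ C, b ∉ A ∧ b ^ p ∈ A ∧ ∀ g : Γ, b⁻¹ * (g * b * g⁻¹) ∈ A := by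
  have hnormal : (C.map (QuotientGroup.mk' A)).Normal :=
    Subgroup.Normal.map inferInstance _ (QuotientGroup.mk'_surjective A)
  have hne : C.map (QuotientGroup.mk' A) ≠ ⊥ := by
    rw [Ne, Subgroup.map_eq_bot_iff, QuotientGroup.ker_mk']
    exact hAC.not_ge
  obtain ⟨_, ⟨b, hbC, rfl⟩, hcenter, hord⟩ :=
    exists_mem_center_orderOf_eq_prime (hΓ.to_quotient A) hne
  refine ⟨b, hbC, fun hbA => ?_, ?_, fun g => ?_⟩
  · rw [QuotientGroup.mk'_apply, (QuotientGroup.eq_one_iff b).mpr hbA, orderOf_one] at hord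
    exact (Fact.out : p.Prime).ne_one hord.symm
  · rw [← QuotientGroup.eq_one_iff, QuotientGroup.mk_pow, ← hord]
    exact pow_orderOf_eq_one _
  · have hg := Subgroup.mem_center_iff.mp hcenter (g : Γ ⧸ A)
    rw [← QuotientGroup.eq_one_iff]
    change (b : Γ ⧸ A)⁻¹ * (g * b * (g : Γ ⧸ A)⁻¹) = 1
    rw [inv_mul_eq_one, eq_mul_inv_iff_mul_eq]
    exact hg.symm

end PGroup

section UniqueInvolution

variable {Γ : Type*} [Group Γ] {z : Γ}

lemma even_natCard_sq_eq_one [Finite Γ] (h : Even (Nat.card Γ)) :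
    Even (Nat.card {x : Γ // x ^ 2 = 1}) := by
  classical
  have := Fintype.ofFinite Γ
  have : Fact (Nat.Prime 2) := ⟨Nat.prime_two⟩
  let f : Function.End Γ := fun x => x⁻¹
  have hf : f ^ 2 ^ 1 = 1 := funext inv_inv
  have hcard : Nat.card {x : Γ // x ^ 2 = 1} = Fintype.card f.fixedPoints := by
    rw [← Nat.card_eq_fintype_card]
    exact Nat.card_congr (Equiv.subtypeEquivRight fun x =>
      (sq x ▸ mul_eq_one_iff_inv_eq : x ^ 2 = 1 ↔ x⁻¹ = x))
  have hmod := Equiv.Perm.card_fixedPoints_modEq hf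
  rw [← Nat.card_eq_fintype_card, ← hcard] at hmod
  rw [even_iff_two_dvd] at h ⊢
  exact (hmod.dvd_iff dvd_rfl).mp h

/-- `z` is the only involution of the group; the equivalence also records that `z` is one. -/
def IsUniqueInvolution (z : Γ) : Prop := z ≠ 1 ∧ ∀ x : Γ, x ^ 2 = 1 ↔ x = 1 ∨ x = z

namespace IsUniqueInvolution

lemma sq (hz : IsUniqueInvolution z) : z ^ 2 = 1 := (hz.2 z).mpr (Or.inr rfl)

lemma orderOf_eq (hz : IsUniqueInvolution z) : orderOf z = 2 := orderOf_eq_prime hz.sq hz.1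

lemma commute (hz : IsUniqueInvolution z) (x : Γ) : Commute x z := by
  have h : (x * z * x⁻¹) ^ 2 = 1 := by rw [conj_pow, hz.sq, mul_one, mul_inv_cancel]
  rcases (hz.2 _).mp h with h | h
  · exact absurd (conj_eq_one_iff.mp h) hz.1
  · exact mul_inv_eq_iff_eq_mul.mp h

lemma pow_eq (hz : IsUniqueInvolution z) {y : Γ} {n : ℕ} (hy : orderOf y = 2 * n) (hn : n ≠ 0) :
    y ^ n = z := by
  have h : (y ^ n) ^ 2 = 1 := by rw [← pow_mul, mul_comm, ← hy, pow_orderOf_eq_one]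
  refine ((hz.2 _).mp h).resolve_left fun h1 => ?_
  have := Nat.le_of_dvd (Nat.pos_of_ne_zero hn) (orderOf_dvd_of_pow_eq_one h1)
  omega

lemma subgroup (hz : IsUniqueInvolution z) {Q : Subgroup Γ} (hQ : z ∈ Q) :
    IsUniqueInvolution (⟨z, hQ⟩ : Q) := by
  refine ⟨fun h => hz.1 (congrArg Subtype.val h), fun x => ?_⟩
  simpa only [Subtype.ext_iff, Subgroup.coe_pow, Subgroup.coe_one] using hz.2 x

lemma mem_of_even_card [Finite Γ] (hz : IsUniqueInvolution z) {Q : Subgroup Γ}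
    (hQ : 2 ∣ Nat.card Q) : z ∈ Q := by
  have : Fact (Nat.Prime 2) := ⟨Nat.prime_two⟩
  obtain ⟨x, hx⟩ := exists_prime_orderOf_dvd_card' 2 hQ
  have hxz := hz.pow_eq (y := (x : Γ)) (n := 1) (by rw [Subgroup.orderOf_coe, hx]) one_ne_zero
  exact hxz ▸ pow_mem x.2 1

lemma orderOf_eq_four_iff (hz : IsUniqueInvolution z) {x : Γ} : orderOf x = 4 ↔ x ^ 2 = z := by
  refine ⟨fun h => hz.pow_eq (n := 2) h two_ne_zero, fun h => ?_⟩
  refine orderOf_eq_prime_pow (p := 2) (n := 1) ?_ ?_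
  · rw [pow_one, h]
    exact hz.1
  · rw [pow_succ, pow_mul, pow_one, h, hz.sq]

lemma mem_zpowers_iff (hz : IsUniqueInvolution z) {x : Γ} :
    x ∈ Subgroup.zpowers z ↔ x = 1 ∨ x = z := by
  refine ⟨?_, ?_⟩
  · rintro ⟨i, rfl⟩
    refine (hz.2 _).mp ?_
    change (z ^ i) ^ 2 = 1
    rw [← zpow_natCast, zpow_comm, zpow_natCast, hz.sq, one_zpow]
  · rintro (rfl | rfl)
    exacts [one_mem _, Subgroup.mem_zpowers _]

lemma normal_zpowers (hz : IsUniqueInvolution z) : (Subgroup.zpowers z).Normal := by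
  refine ⟨fun x hx g => ?_⟩
  rw [hz.mem_zpowers_iff, ← hz.2] at hx ⊢
  rw [conj_pow, hx, mul_one, mul_inv_cancel]

lemma natCard_pow_four_eq_one [Finite Γ] (hz : IsUniqueInvolution z) :
    Nat.card {x : Γ // x ^ 4 = 1} = orderCount Γ 4 + 2 := by
  have hunion : {x : Γ | x ^ 4 = 1} = {x | orderOf x = 4} ∪ {1, z} := by
    ext x
    simp only [Set.mem_ofPred_eq, Set.mem_union, Set.mem_insert_iff, Set.mem_singleton_iff,
      hz.orderOf_eq_four_iff]
    rw [show 4 = 2 * 2 from rfl, pow_mul, hz.2, hz.2]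
    tauto
  have hdisj : Disjoint {x : Γ | orderOf x = 4} {1, z} := by
    rw [Set.disjoint_insert_right, Set.disjoint_singleton_right]
    simp [hz.orderOf_eq]
  have := Set.ncard_union_eq hdisj
  rwa [← hunion, Set.ncard_pair hz.1.symm] at this

-- Modulo `⟨z⟩`, the solutions of `x ^ 4 = 1` become those of `q ^ 2 = 1`, whose number is even.
lemma orderCount_four_mod [Finite Γ] (hz : IsUniqueInvolution z) (h4 : 4 ∣ Nat.card Γ) :
    orderCount Γ 4 % 4 = 2 := by
  have hnormal := hz.normal_zpowers
  have hquot : Even (Nat.card (Γ ⧸ Subgroup.zpowers z)) := by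
    have := (Subgroup.zpowers z).card_eq_card_quotient_mul_card_subgroup
    rw [Nat.card_zpowers, hz.orderOf_eq] at this
    exact even_iff_two_dvd.mpr (by omega)
  have hpre : Nat.card {x : Γ // x ^ 4 = 1} =
      2 * Nat.card {q : Γ ⧸ Subgroup.zpowers z // q ^ 2 = 1} := by
    have := QuotientGroup.card_preimage_mk (Subgroup.zpowers z) {q | q ^ 2 = 1}
    rw [Nat.card_zpowers, hz.orderOf_eq] at this
    refine Eq.trans (Nat.card_congr (Equiv.subtypeEquivRight fun x => ?_)) this
    change _ ↔ ((x ^ 2 : Γ) : Γ ⧸ Subgroup.zpowers z) = 1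
    rw [QuotientGroup.eq_one_iff, hz.mem_zpowers_iff, ← hz.2, ← pow_mul]
  have := even_natCard_sq_eq_one hquot
  rw [hz.natCard_pow_four_eq_one] at hpre
  rw [Nat.even_iff] at this
  omega

section Normalizing

variable {y b : Γ} {k : ℕ} {s : ℤ}

lemma sq_zpow_mul_ne_one (hz : IsUniqueInvolution z) (hzy : z ∈ Subgroup.zpowers y)
    (hb : b ∉ Subgroup.zpowers y) (i : ℤ) : (y ^ i * b) ^ 2 ≠ 1 := by
  intro h
  refine hb ((Subgroup.mul_mem_cancel_left _ (zpow_mem (Subgroup.mem_zpowers y) i)).mp ?_)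
  rcases (hz.2 _).mp h with h | h <;> rw [h]
  exacts [one_mem _, hzy]

lemma mem_zpowers_of_four_dvd_sub_one (hz : IsUniqueInvolution z) (hy : orderOf y = 2 ^ k)
    (hzy : z ∈ Subgroup.zpowers y) (hb : b ∉ Subgroup.zpowers y)
    (hsq : b ^ 2 ∈ Subgroup.zpowers y) (hs : SemiconjBy b y (y ^ s)) (hs4 : 4 ∣ s - 1) :
    y ∈ Subgroup.zpowers b := by
  obtain ⟨j, hj : y ^ j = b ^ 2⟩ := hsq
  have hcop {c : ℤ} (hc : Odd c) : IsCoprime c (2 ^ k) :=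
    (Int.isCoprime_two_right.mpr hc).pow_right
  rcases Int.even_or_odd' j with ⟨l, rfl | rfl⟩
  · obtain ⟨c, hc⟩ := hs4
    obtain ⟨u, v, huv⟩ := hcop (odd_two_mul_add_one c)
    refine absurd ?_ (hz.sq_zpow_mul_ne_one hzy hb (-l * u))
    rw [sq_zpow_mul_of_semiconjBy_zpow hs, ← hj, ← zpow_add, ← orderOf_dvd_iff_zpow_eq_one, hy]
    refine ⟨2 * l * v, ?_⟩
    push_cast
    linear_combination (-l * u) * hc - 2 * l * huv
  · have hjb : y ^ (2 * l + 1) ∈ Subgroup.zpowers b := hj ▸ pow_mem (Subgroup.mem_zpowers b) 2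
    refine Subgroup.zpowers_le.mpr hjb (mem_zpowers_zpow_iff.mpr ?_)
    rw [← Int.isCoprime_iff_gcd_eq_one, hy]
    exact_mod_cast hcop (odd_two_mul_add_one l)

lemma sq_eq_of_four_dvd_add_one (hz : IsUniqueInvolution z) (hy : orderOf y = 2 ^ k)
    (hzy : z ∈ Subgroup.zpowers y) (hb : b ∉ Subgroup.zpowers y)
    (hsq : b ^ 2 ∈ Subgroup.zpowers y) (hs : SemiconjBy b y (y ^ s)) (hs4 : 4 ∣ s + 1) :
    b ^ 2 = z := by
  obtain ⟨j, hj : y ^ j = b ^ 2⟩ := hsq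
  have hfix : y ^ (s * j) = y ^ j := by
    have hcomm := hs.zpow_right j
    rw [← zpow_mul, hj] at hcomm
    exact hj ▸ mul_right_cancel (hcomm.symm.trans ((Commute.refl b).pow_right 2))
  have hpow : (y ^ j) ^ 2 = 1 := by
    obtain ⟨d, hd⟩ := hs4
    have hcop : IsCoprime (2 ^ k : ℤ) (2 * d - 1) :=
      (Int.isCoprime_two_left.mpr ⟨d - 1, by ring⟩).pow_left
    rw [← mul_inv_eq_one, ← zpow_neg, ← zpow_add, ← orderOf_dvd_iff_zpow_eq_one, hy] at hfix
    rw [← zpow_natCast, ← zpow_mul, ← orderOf_dvd_iff_zpow_eq_one, hy]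
    push_cast at hfix ⊢
    refine hcop.dvd_of_dvd_mul_left (hfix.trans (dvd_of_eq ?_))
    linear_combination j * hd
  refine hj ▸ ((hz.2 _).mp hpow).resolve_left fun h => hz.sq_zpow_mul_ne_one hzy hb 0 ?_
  rw [zpow_zero, one_mul, ← hj, h]

-- Both `b` and `y * b` square to `z`, which forces `y ^ (s + 1) = 1`.
lemma semiconjBy_inv_of_four_dvd_add_one (hz : IsUniqueInvolution z) (hy : orderOf y = 2 ^ k)
    (hzy : z ∈ Subgroup.zpowers y) (hb : b ∉ Subgroup.zpowers y)
    (hsq : b ^ 2 ∈ Subgroup.zpowers y) (hs : SemiconjBy b y (y ^ s)) (hs4 : 4 ∣ s + 1) :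
    SemiconjBy b y y⁻¹ := by
  have hymem := Subgroup.mem_zpowers y
  have hyb := sq_zpow_mul_of_semiconjBy_zpow hs 1
  rw [zpow_one] at hyb
  have hybz : (y * b) ^ 2 = z := by
    refine hz.sq_eq_of_four_dvd_add_one hy hzy
      (fun h => hb ((Subgroup.mul_mem_cancel_left _ hymem).mp h)) ?_
      (((Commute.refl y).zpow_right s).semiconjBy.mul_left hs) hs4
    rw [hyb]
    exact mul_mem (zpow_mem hymem _) hsq
  rw [hz.sq_eq_of_four_dvd_add_one hy hzy hb hsq hs hs4, hybz, eq_comm, mul_eq_right, mul_one,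
    add_comm, zpow_add_one, mul_eq_one_iff_eq_inv] at hyb
  rwa [hyb] at hs

lemma mem_zpowers_or_inverts (hz : IsUniqueInvolution z) (hy : orderOf y = 2 ^ k)
    (hzy : z ∈ Subgroup.zpowers y) (hb : b ∉ Subgroup.zpowers y)
    (hsq : b ^ 2 ∈ Subgroup.zpowers y) (hconj : b * y * b⁻¹ ∈ Subgroup.zpowers y) :
    y ∈ Subgroup.zpowers b ∨ SemiconjBy b y y⁻¹ ∧ b ^ 2 = z := by
  obtain ⟨s, hs : y ^ s = b * y * b⁻¹⟩ := hconj
  have hsemi : SemiconjBy b y (y ^ s) := (eq_mul_inv_iff_mul_eq.mp hs).symm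
  have hzs : z ^ s = z := by
    obtain ⟨j, rfl⟩ := hzy
    have h := hsemi.zpow_right j
    rw [← zpow_mul, zpow_mul'] at h
    exact mul_right_cancel (h.symm.trans (hz.commute b))
  have hodd : Odd s := by
    refine Int.not_even_iff_odd.mp fun hs2 => hz.1 ?_
    rw [← hzs, ← orderOf_dvd_iff_zpow_eq_one, hz.orderOf_eq]
    exact even_iff_two_dvd.mp hs2
  rcases (by have := Int.odd_iff.mp hodd; omega : 4 ∣ s - 1 ∨ 4 ∣ s + 1) with hs4 | hs4
  · exact Or.inl (hz.mem_zpowers_of_four_dvd_sub_one hy hzy hb hsq hsemi hs4)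
  · exact Or.inr ⟨hz.semiconjBy_inv_of_four_dvd_add_one hy hzy hb hsq hsemi hs4,
      hz.sq_eq_of_four_dvd_add_one hy hzy hb hsq hsemi hs4⟩

end Normalizing

section QuaternionDichotomy

variable {y b : Γ} {k : ℕ}

lemma mem_zpowers_of_commute [Finite Γ] (hz : IsUniqueInvolution z) (hΓ : IsPGroup 2 Γ)
    (hnormal : (Subgroup.zpowers y).Normal) (hzy : z ∈ Subgroup.zpowers y)
    (hmax : ∀ x : Γ, (Subgroup.zpowers x).Normal → orderOf x ≤ orderOf y) {c : Γ}
    (hc : Commute c y) : c ∈ Subgroup.zpowers y := by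
  have : Fact (Nat.Prime 2) := ⟨Nat.prime_two⟩
  obtain ⟨k, hk⟩ := IsPGroup.iff_orderOf.mp hΓ y
  by_contra hcy
  have hlt : Subgroup.zpowers y < Subgroup.centralizer (Subgroup.zpowers y) := by
    refine SetLike.lt_iff_le_and_exists.mpr ⟨Subgroup.le_centralizer _, c, ?_, hcy⟩
    rintro _ ⟨i, rfl⟩
    exact (hc.zpow_right i).symm
  obtain ⟨b, hbC, hbA, hsq, hcomm⟩ := exists_mem_notMem_pow_mem_of_lt hΓ hlt
  have hby : Commute b y :=
    (Subgroup.mem_centralizer_iff.mp hbC y (Subgroup.mem_zpowers y)).symm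
  have hyb : y ∈ Subgroup.zpowers b := by
    refine (hz.mem_zpowers_or_inverts hk hzy hbA hsq
      (hnormal.conj_mem y (Subgroup.mem_zpowers y) b)).elim id fun ⟨hinv, hb2⟩ => ?_
    have hyy : y = y⁻¹ := mul_right_cancel (hby.eq.symm.trans hinv.eq)
    have hy2 : y ^ 2 = 1 := by rw [pow_two, mul_eq_one_iff_eq_inv, ← hyy]
    rcases (hz.2 y).mp hy2 with rfl | rfl
    · exact one_mem _
    · exact hb2 ▸ pow_mem (Subgroup.mem_zpowers b) 2
  have hbnormal : (Subgroup.zpowers b).Normal := by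
    have hconj (g : Γ) : g * b * g⁻¹ ∈ Subgroup.zpowers b :=
      (Subgroup.mul_mem_cancel_left _ (inv_mem (Subgroup.mem_zpowers b))).mp
        (Subgroup.zpowers_le.mpr hyb (hcomm g))
    refine ⟨?_⟩
    rintro _ ⟨i, rfl⟩ g
    exact conj_zpow (i := i) (a := g) (b := b) ▸ zpow_mem (hconj g) i
  have hle' := Subgroup.eq_of_le_of_card_ge (Subgroup.zpowers_le.mpr hyb)
    (by simpa only [Nat.card_zpowers] using hmax b hbnormal)
  exact hbA (hle' ▸ Subgroup.mem_zpowers b)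

lemma inverts_of_sq_mem (hz : IsUniqueInvolution z) (hy : orderOf y = 2 ^ k)
    (hnormal : (Subgroup.zpowers y).Normal)
    (hcent : ∀ x : Γ, Commute x y → x ∈ Subgroup.zpowers y)
    (hb : b ∉ Subgroup.zpowers y) (hsq : b ^ 2 ∈ Subgroup.zpowers y) :
    SemiconjBy b y y⁻¹ ∧ b ^ 2 = z := by
  refine (hz.mem_zpowers_or_inverts hy (hcent z (hz.commute y).symm) hb hsq
    (hnormal.conj_mem y (Subgroup.mem_zpowers y) b)).resolve_left ?_
  rintro ⟨i, rfl⟩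
  exact hb (hcent b ((Commute.refl b).zpow_right i))

-- If `b ^ 2` inverted `y`, then `b` would act on `⟨y⟩` as a square root of `-1` modulo `4`.
lemma sq_mem_of_pow_four_mem (hz : IsUniqueInvolution z)
    (hy : orderOf y = 2 ^ k) (hnormal : (Subgroup.zpowers y).Normal)
    (hcent : ∀ x : Γ, Commute x y → x ∈ Subgroup.zpowers y)
    (hb : (b ^ 2) ^ 2 ∈ Subgroup.zpowers y) : b ^ 2 ∈ Subgroup.zpowers y := by
  by_contra hb2
  have hinv := (hz.inverts_of_sq_mem hy hnormal hcent hb2 hb).1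
  obtain ⟨s, hs : y ^ s = b * y * b⁻¹⟩ := hnormal.conj_mem y (Subgroup.mem_zpowers y) b
  have hsemi : SemiconjBy b y (y ^ s) := (eq_mul_inv_iff_mul_eq.mp hs).symm
  have hss : y ^ (s * s + 1) = 1 := by
    have h := (hsemi.zpow_right s).mul_left hsemi
    rw [← pow_two, ← zpow_mul] at h
    rw [zpow_add_one, mul_eq_one_iff_eq_inv]
    exact mul_right_cancel (h.symm.trans hinv)
  have hk : 2 ≤ k := by
    by_contra! hk
    have hy2 : y ^ 2 = 1 :=
      orderOf_dvd_iff_pow_eq_one.mp (hy ▸ pow_dvd_pow 2 (Nat.le_of_lt_succ hk))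
    rw [← eq_inv_iff_mul_eq_one.mpr ((pow_two y).symm.trans hy2)] at hinv
    exact hb2 (hcent _ hinv)
  rw [← orderOf_dvd_iff_zpow_eq_one, hy] at hss
  have h4 : (4 : ℤ) ∣ s * s + 1 :=
    Dvd.dvd.trans (by exact_mod_cast pow_dvd_pow 2 hk) hss
  rcases Int.even_or_odd' s with ⟨c, rfl | rfl⟩ <;> ring_nf at h4 <;> omega

lemma inverts (hz : IsUniqueInvolution z) (hΓ : IsPGroup 2 Γ)
    (hnormal : (Subgroup.zpowers y).Normal)
    (hcent : ∀ x : Γ, Commute x y → x ∈ Subgroup.zpowers y)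
    (hb : b ∉ Subgroup.zpowers y) : SemiconjBy b y y⁻¹ ∧ b ^ 2 = z := by
  have : Fact (Nat.Prime 2) := ⟨Nat.prime_two⟩
  obtain ⟨k, hk⟩ := IsPGroup.iff_orderOf.mp hΓ y
  have hsq (n : ℕ) : ∀ x : Γ, x ^ 2 ^ n ∈ Subgroup.zpowers y → x ^ 2 ∈ Subgroup.zpowers y := by
    induction n with
    | zero => exact fun x hx => pow_mem (pow_one x ▸ hx) 2
    | succ n ih =>
      refine fun x hx => hz.sq_mem_of_pow_four_mem hk hnormal hcent (ih _ ?_)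
      rwa [← pow_mul, ← pow_succ']
  obtain ⟨n, hn⟩ := hΓ b
  exact hz.inverts_of_sq_mem hk hnormal hcent hb (hsq n b (hn ▸ one_mem _))

theorem isCyclic_or_exists_index_eq_two [Finite Γ] (hz : IsUniqueInvolution z)
    (hΓ : IsPGroup 2 Γ) : IsCyclic Γ ∨ ∃ y : Γ, (Subgroup.zpowers y).index = 2 ∧
      ∀ b ∉ Subgroup.zpowers y, SemiconjBy b y y⁻¹ ∧ b ^ 2 = z := by
  obtain ⟨y, hnormal, hmax⟩ := Set.exists_max_image {x : Γ | (Subgroup.zpowers x).Normal} orderOf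
    (Set.toFinite _) ⟨z, hz.normal_zpowers⟩
  have : Fact (Nat.Prime 2) := ⟨Nat.prime_two⟩
  have hzy : z ∈ Subgroup.zpowers y := by
    obtain ⟨k, hk⟩ := IsPGroup.iff_orderOf.mp hΓ y
    have hle := hmax z hz.normal_zpowers
    refine hz.mem_of_even_card ?_
    rw [Nat.card_zpowers, hk]
    rw [hz.orderOf_eq, hk] at hle
    exact dvd_pow_self 2 fun h => by simp [h] at hle
  have hcent (x : Γ) (hx : Commute x y) : x ∈ Subgroup.zpowers y :=
    hz.mem_zpowers_of_commute hΓ hnormal hzy hmax hx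
  have hinv {b : Γ} (hb : b ∉ Subgroup.zpowers y) : SemiconjBy b y y⁻¹ ∧ b ^ 2 = z :=
    hz.inverts hΓ hnormal hcent hb
  by_cases hcyc : ∀ b, b ∈ Subgroup.zpowers y
  · exact Or.inl ⟨y, hcyc⟩
  push Not at hcyc
  obtain ⟨a, ha⟩ := hcyc
  refine Or.inr ⟨y, ?_, fun b hb => hinv hb⟩
  refine Subgroup.index_eq_two_iff_exists_notMem_and.mpr ⟨a, ha, fun b => ?_⟩
  by_contra! hb
  have hba := (hinv hb.2).1.inv_right.mul_left (hinv ha).1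
  rw [inv_inv] at hba
  exact hb.1 (hcent _ hba)

end QuaternionDichotomy

end IsUniqueInvolution

end UniqueInvolution

/-! ### Nilpotency criteria and complements with cyclic Sylow subgroups -/

section CoprimeAction

variable {Γ : Type*} [Group Γ]

lemma semiconjBy_pow_zpow_pow {b y : Γ} {s : ℤ} (h : SemiconjBy b y (y ^ s)) (n : ℕ) :
    SemiconjBy (b ^ n) y (y ^ s ^ n) := by
  induction n with
  | zero => simp
  | succ n ih =>
    have := (h.zpow_right (s ^ n)).mul_left ih
    rwa [SemiconjBy, ← pow_succ', ← zpow_mul, ← pow_succ'] at this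

lemma commute_of_coprime_totient {a y : Γ} {m : ℕ} (hm0 : m ≠ 0)
    (hm : m.Coprime (orderOf y).totient) (ha : a ^ m = 1)
    (hconj : a * y * a⁻¹ ∈ Subgroup.zpowers y) : Commute a y := by
  obtain ⟨s, hs : y ^ s = a * y * a⁻¹⟩ := hconj
  have hsemi : SemiconjBy a y (y ^ s) := (eq_mul_inv_iff_mul_eq.mp hs).symm
  have hsm : (s : ZMod (orderOf y)) ^ m = 1 := by
    have h := semiconjBy_pow_zpow_pow hsemi m
    rw [ha, SemiconjBy, one_mul, mul_one] at h
    have := orderOf_dvd_sub_iff_zpow_eq_zpow.mpr (h.symm.trans (zpow_one y).symm)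
    rw [← ZMod.intCast_eq_intCast_iff_dvd_sub] at this
    exact_mod_cast this.symm
  obtain ⟨u, hu⟩ := IsUnit.of_pow_eq_one hsm hm0
  have hu1 : u = 1 := by
    have hum : u ^ m = 1 := Units.ext (by rw [Units.val_pow_eq_pow_val, hu, hsm, Units.val_one])
    have := pow_gcd_eq_one.mpr ⟨hum, ZMod.pow_totient u⟩
    rwa [hm.gcd_eq_one, pow_one] at this
  have hys : y ^ (1 : ℤ) = y ^ s := by
    rw [← orderOf_dvd_sub_iff_zpow_eq_zpow, ← ZMod.intCast_eq_intCast_iff_dvd_sub, ← hu, hu1,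
      Units.val_one, Int.cast_one]
  rwa [← hys, zpow_one] at hsemi

lemma commute_of_coprime {a c x : Γ} {m N : ℕ} (hm : m.Coprime N) (ha : a ^ m = 1)
    (hc : c ^ N = 1) (hac : Commute a c) (hax : a * x = c * (x * a)) : Commute a x := by
  have hconj : x * a * x⁻¹ = c⁻¹ * a := by
    rw [mul_inv_eq_iff_eq_mul, mul_assoc, hax, inv_mul_cancel_left]
  have hcm : c ^ m = 1 := by
    have h := congrArg (· ^ m) hconj
    simp only [conj_pow, hac.symm.inv_left.mul_pow, ha, inv_pow, mul_one, mul_inv_cancel] at h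
    exact inv_eq_one.mp h.symm
  have hc1 := pow_gcd_eq_one.mpr ⟨hcm, hc⟩
  rw [hm.gcd_eq_one, pow_one] at hc1
  rwa [hc1, one_mul] at hax

lemma isNilpotent_of_isComplement'_of_commute {P Q : Subgroup Γ} (hP : Group.IsNilpotent P)
    (hQ : Group.IsNilpotent Q) (hPQ : P.IsComplement' Q)
    (hcomm : ∀ x ∈ P, ∀ y ∈ Q, Commute x y) : Group.IsNilpotent Γ := by
  let f : P × Q →* Γ := MonoidHom.noncommCoprod P.subtype Q.subtype
    fun x y => hcomm x x.2 y y.2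
  have := Group.isNilpotent_prod (G₁ := P) (G₂ := Q)
  exact Group.nilpotent_of_surjective f hPQ.2

end CoprimeAction

section CyclicSylow

variable {Γ : Type*} [Group Γ]

lemma not_three_dvd_sq_add_one (x : ℤ) : ¬ 3 ∣ x ^ 2 + 1 := by
  have h : ∀ r : ZMod 3, r ^ 2 + 1 ≠ 0 := by decide
  exact fun hx => h x (by exact_mod_cast (ZMod.intCast_zmod_eq_zero_iff_dvd (x ^ 2 + 1) 3).mpr hx)

lemma three_pow_dvd_sub_one_or_add_one {t : ℤ} {e n : ℕ} (h : 3 ^ e ∣ t ^ 2 ^ n - 1) :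
    3 ^ e ∣ t - 1 ∨ 3 ^ e ∣ t + 1 := by
  have hcop {c : ℤ} (hc : ¬ 3 ∣ c) : IsCoprime ((3 : ℤ) ^ e) c :=
    (Int.prime_three.coprime_iff_not_dvd.mpr hc).pow_left
  induction n with
  | zero => exact Or.inl (by simpa only [pow_zero, pow_one] using h)
  | succ n ih =>
    have hfactor : t ^ 2 ^ (n + 1) - 1 = (t ^ 2 ^ n - 1) * (t ^ 2 ^ n + 1) := by ring
    rw [hfactor] at h
    rcases n with _ | n
    · rw [pow_zero, pow_one] at h
      by_cases h3 : 3 ∣ t + 1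
      · exact Or.inr ((hcop (by omega)).dvd_of_dvd_mul_left h)
      · exact Or.inl ((hcop h3).dvd_of_dvd_mul_right h)
    · refine ih ((hcop ?_).dvd_of_dvd_mul_right h)
      rw [pow_succ, pow_mul]
      exact not_three_dvd_sq_add_one _

lemma nonempty_mulEquiv_metacyclic_of_isComplement' {e n : ℕ} {P Q : Subgroup Γ}
    (hPnormal : P.Normal) (hPQ : P.IsComplement' Q) (hP : Nat.card P = 3 ^ e)
    (hQ : Nat.card Q = 2 ^ n) (hPcyc : IsCyclic P) (hQcyc : IsCyclic Q)
    (hnil : ¬ Group.IsNilpotent Γ) :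
    Nonempty (Γ ≃* Metacyclic (3 ^ e) (2 ^ n) (-1)) := by
  obtain ⟨a, rfl⟩ := P.isCyclic_iff_exists_zpowers_eq_top.mp hPcyc
  obtain ⟨b, rfl⟩ := Q.isCyclic_iff_exists_zpowers_eq_top.mp hQcyc
  have hcard := hPQ.card_mul_card
  rw [hP, hQ] at hcard
  rw [Nat.card_zpowers] at hP hQ
  obtain ⟨t, ht : a ^ t = b * a * b⁻¹⟩ := hPnormal.conj_mem a (Subgroup.mem_zpowers a) b
  have hsemi : SemiconjBy b a (a ^ t) := (eq_mul_inv_iff_mul_eq.mp ht).symm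
  have ht1 : 3 ^ e ∣ t ^ 2 ^ n - 1 := by
    have h := semiconjBy_pow_zpow_pow hsemi (2 ^ n)
    rw [← hQ, pow_orderOf_eq_one, SemiconjBy, one_mul, mul_one, hQ] at h
    have := orderOf_dvd_sub_iff_zpow_eq_zpow.mpr (h.symm.trans (zpow_one a).symm)
    rwa [hP, Nat.cast_pow] at this
  have hpow {u : ℤ} (hu : 3 ^ e ∣ t - u) : a ^ t = a ^ u :=
    orderOf_dvd_sub_iff_zpow_eq_zpow.mp (by rw [hP]; exact_mod_cast hu)
  rcases three_pow_dvd_sub_one_or_add_one ht1 with h1 | h1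
  · rw [hpow h1, zpow_one] at hsemi
    refine absurd (isNilpotent_of_isComplement'_of_commute
      (@CommGroup.isNilpotent _ IsCyclic.commGroup)
      (@CommGroup.isNilpotent _ IsCyclic.commGroup) hPQ ?_) hnil
    rintro _ ⟨i, rfl⟩ _ ⟨j, rfl⟩
    exact (Commute.zpow_zpow hsemi j i).symm
  · rw [hpow (u := -1) (by rwa [sub_neg_eq_add]), zpow_neg_one] at hsemi
    refine Metacyclic.nonempty_mulEquiv (by positivity) (by positivity)
      (hP ▸ pow_orderOf_eq_one a) (hQ ▸ pow_orderOf_eq_one b) hsemi ?_ hcard.symm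
    rw [Set.insert_eq, Subgroup.closure_union, ← Subgroup.zpowers_eq_closure,
      ← Subgroup.zpowers_eq_closure, hPQ.sup_eq_top]

lemma natCard_sylow_two {e n : ℕ} (hcard : Nat.card Γ = 3 ^ e * 2 ^ n) (S : Sylow 2 Γ) :
    Nat.card S = 2 ^ n := by
  have : Finite Γ := Nat.finite_of_card_ne_zero (by rw [hcard]; positivity)
  have : Fact (Nat.Prime 2) := ⟨Nat.prime_two⟩
  rw [S.card_eq_multiplicity, hcard, Nat.factorization_mul (by positivity) (by positivity)]
  simp [Nat.prime_two.factorization, Nat.prime_three.factorization]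

lemma nonempty_mulEquiv_metacyclic_of_isCyclic_sylow {e n : ℕ} (hn : n ≠ 0)
    (hcard : Nat.card Γ = 3 ^ e * 2 ^ n) (hnil : ¬ Group.IsNilpotent Γ)
    (hcyc : ∀ P : Subgroup Γ, Nat.card P = 3 ^ e → IsCyclic P) (S : Sylow 2 Γ)
    (hS : IsCyclic S) : Nonempty (Γ ≃* Metacyclic (3 ^ e) (2 ^ n) (-1)) := by
  have : Finite Γ := Nat.finite_of_card_ne_zero (by rw [hcard]; positivity)
  have hmin : (Nat.card Γ).minFac = 2 := by
    rw [Nat.minFac_eq_two_iff, hcard]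
    exact (dvd_pow_self 2 hn).mul_left _
  have hcompl := hS.isComplement' hmin
  have hScard := natCard_sylow_two hcard S
  have hN : Nat.card (MonoidHom.transferSylow S (hS.normalizer_le_centralizer hmin)).ker =
      3 ^ e := by
    have := hcompl.card_mul_card
    rw [hcard, hScard] at this
    exact Nat.eq_of_mul_eq_mul_right (by positivity) this
  exact nonempty_mulEquiv_metacyclic_of_isComplement' (MonoidHom.normal_ker _) hcompl hN hScard
    (hcyc _ hN) hS hnil

end CyclicSylow

/-! ### Quaternion subgroups and complements of order 24, 48 and 288 -/

/-- `Q` is a generalized quaternion subgroup with cyclic maximal subgroup `⟨y⟩` and central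
involution `z`, in the sense that `⟨y⟩` has index two in `Q` and every element of `Q` outside `⟨y⟩`
inverts `y` and squares to `z`. That `z` is an involution is not part of the definition. -/
structure IsQuaternionSubgroup {Γ : Type*} [Group Γ] (Q : Subgroup Γ) (y z : Γ) : Prop where
  mem : y ∈ Q
  relIndex_eq : (Subgroup.zpowers y).relIndex Q = 2
  semiconjBy : ∀ b ∈ Q, b ∉ Subgroup.zpowers y → SemiconjBy b y y⁻¹
  sq_eq : ∀ b ∈ Q, b ∉ Subgroup.zpowers y → b ^ 2 = z

namespace IsQuaternionSubgroup

variable {Γ : Type*} [Group Γ] {Q : Subgroup Γ} {y z : Γ}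

lemma natCard_eq (h : IsQuaternionSubgroup Q y z) : Nat.card Q = orderOf y * 2 := by
  have hle : Subgroup.zpowers y ≤ Q := Subgroup.zpowers_le.mpr h.mem
  rw [← Subgroup.relIndex_bot_left, ← Subgroup.relIndex_mul_relIndex ⊥ _ Q bot_le hle,
    Subgroup.relIndex_bot_left, Nat.card_zpowers, h.relIndex_eq]

lemma mul_mem_iff (h : IsQuaternionSubgroup Q y z) {b c : Γ} (hb : b ∈ Q) (hc : c ∈ Q) :
    b * c ∈ Subgroup.zpowers y ↔ (b ∈ Subgroup.zpowers y ↔ c ∈ Subgroup.zpowers y) :=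
  Subgroup.mul_mem_iff_of_index_two h.relIndex_eq (a := ⟨b, hb⟩) (b := ⟨c, hc⟩)

lemma exists_eq_zpow_mul (h : IsQuaternionSubgroup Q y z) {b c : Γ} (hb : b ∈ Q) (hc : c ∈ Q)
    (hby : b ∉ Subgroup.zpowers y) (hcy : c ∉ Subgroup.zpowers y) : ∃ i : ℤ, c = y ^ i * b := by
  have hcb : c * b⁻¹ ∈ Subgroup.zpowers y :=
    (h.mul_mem_iff hc (inv_mem hb)).mpr (by simp only [inv_mem_iff, hby, hcy])
  obtain ⟨i, hi : y ^ i = c * b⁻¹⟩ := hcb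
  exact ⟨i, by rw [hi, inv_mul_cancel_right]⟩

lemma exists_mem_notMem (h : IsQuaternionSubgroup Q y z) : ∃ b ∈ Q, b ∉ Subgroup.zpowers y := by
  by_contra! hle
  have := h.relIndex_eq
  rw [Subgroup.relIndex_eq_one.mpr hle] at this
  omega

lemma orderCount_four [Finite Γ] (h : IsQuaternionSubgroup Q y z) (hz : IsUniqueInvolution z)
    (h4 : 4 ∣ orderOf y) : orderCount Q 4 = orderOf y + 2 := by
  have hcard : Nat.card ((Subgroup.zpowers y).subgroupOf Q) = orderOf y := by
    rw [← Nat.card_zpowers]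
    exact Nat.card_congr (Subgroup.subgroupOfEquivOfLe (Subgroup.zpowers_le.mpr h.mem)).toEquiv
  have hcyc : IsCyclic ((Subgroup.zpowers y).subgroupOf Q) :=
    isCyclic_of_surjective (Subgroup.subgroupOfEquivOfLe (Subgroup.zpowers_le.mpr h.mem)).symm
      (MulEquiv.surjective _)
  have hout : Nat.card {x : Q // x ∉ (Subgroup.zpowers y).subgroupOf Q ∧ orderOf x = 4} =
      Nat.card {x : Q // x ∉ (Subgroup.zpowers y).subgroupOf Q} := by
    refine Nat.card_congr (Equiv.subtypeEquivRight fun x => and_iff_left_of_imp fun hx => ?_)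
    rw [← Subgroup.orderOf_coe, hz.orderOf_eq_four_iff, h.sq_eq x x.2 hx]
  rw [orderCount_eq_add ((Subgroup.zpowers y).subgroupOf Q), hout,
    natCard_notMem_of_index_eq_two h.relIndex_eq, hcard, orderCount_of_isCyclic (hcard.symm ▸ h4),
    add_comm]
  rfl

lemma normal (h : IsQuaternionSubgroup Q y z) (hz : IsUniqueInvolution z)
    (h4 : ∀ x : Γ, orderOf x = 4 → x ∈ Q) : Q.Normal := by
  have hconj {b : Γ} (hb : b ∈ Q) (hby : b ∉ Subgroup.zpowers y) (g : Γ) : g * b * g⁻¹ ∈ Q := by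
    refine h4 _ ?_
    rw [hz.orderOf_eq_four_iff, conj_pow, h.sq_eq b hb hby, (hz.commute g).eq, mul_inv_cancel_right]
  obtain ⟨b, hb, hby⟩ := h.exists_mem_notMem
  refine ⟨fun x hx g => ?_⟩
  by_cases hxy : x ∈ Subgroup.zpowers y
  · have hxby : x * b ∉ Subgroup.zpowers y :=
      fun hc => hby ((Subgroup.mul_mem_cancel_left _ hxy).mp hc)
    have := mul_mem (hconj (mul_mem hx hb) hxby g) (inv_mem (hconj hb hby g))
    rwa [conj_inv, conj_mul, mul_inv_cancel_right] at this
  · exact hconj hx hxy g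

lemma commute (h : IsQuaternionSubgroup Q y z) (hQ : Q.Normal) {k m : ℕ}
    (hy : orderOf y = 2 ^ k) (hm : Odd m) {a x : Γ} (ha : a ^ m = 1)
    (hay : a * y * a⁻¹ ∈ Subgroup.zpowers y) (hx : x ∈ Q) : Commute a x := by
  have hm2 (l : ℕ) : m.Coprime (2 ^ l) := (Nat.coprime_two_right.mpr hm).pow_right l
  have hay' : Commute a y := by
    refine commute_of_coprime_totient hm.pos.ne' ?_ ha hay
    rcases k with _ | k
    · simp [hy]
    · rw [hy, Nat.totient_prime_pow_succ Nat.prime_two]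
      simpa using hm2 k
  by_cases hxy : x ∈ Subgroup.zpowers y
  · obtain ⟨i, rfl⟩ := hxy
    exact hay'.zpow_right i
  · have haxy : a * x * a⁻¹ ∉ Subgroup.zpowers y := by
      rintro ⟨i, hi : y ^ i = a * x * a⁻¹⟩
      exact hxy ⟨i, mul_left_cancel ((hay'.zpow_right i).eq.trans (eq_mul_inv_iff_mul_eq.mp hi))⟩
    obtain ⟨i, hi⟩ := h.exists_eq_zpow_mul hx (hQ.conj_mem x hx a) hxy haxy
    refine commute_of_coprime (c := y ^ i) (N := 2 ^ k) (hm2 k) ha ?_ (hay'.zpow_right i) ?_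
    · rw [← hy, ← zpow_natCast, zpow_comm, zpow_natCast, pow_orderOf_eq_one, one_zpow]
    · rw [← mul_assoc, ← hi, inv_mul_cancel_right]

lemma isNilpotent [Finite Γ] (h : IsQuaternionSubgroup Q y z) (hQ : Q.Normal) {k : ℕ}
    (hy : orderOf y = 2 ^ k) {P : Subgroup Γ} (hP : Group.IsNilpotent P) (hodd : Odd (Nat.card P))
    (hPQ : P.IsComplement' Q) (hPy : ∀ a ∈ P, a * y * a⁻¹ ∈ Subgroup.zpowers y) :
    Group.IsNilpotent Γ := by
  have : Fact (Nat.Prime 2) := ⟨Nat.prime_two⟩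
  have hQp : IsPGroup 2 Q := IsPGroup.of_card (n := k + 1) (by rw [h.natCard_eq, hy, pow_succ])
  refine isNilpotent_of_isComplement'_of_commute hP hQp.isNilpotent hPQ fun a ha x hx =>
    h.commute hQ hy hodd ?_ (hPy a ha) hx
  exact congrArg Subtype.val (pow_card_eq_one' (x := (⟨a, ha⟩ : P)))

end IsQuaternionSubgroup

section ComplementOrders

variable {Γ : Type*} [Group Γ] {z : Γ} {e n : ℕ}

lemma IsUniqueInvolution.nonempty_mulEquiv_metacyclic_or_exists_isQuaternionSubgroup
    (hz : IsUniqueInvolution z) (hn : n ≠ 0) (hcard : Nat.card Γ = 3 ^ e * 2 ^ n)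
    (hnil : ¬ Group.IsNilpotent Γ) (hcyc : ∀ P : Subgroup Γ, Nat.card P = 3 ^ e → IsCyclic P) :
    Nonempty (Γ ≃* Metacyclic (3 ^ e) (2 ^ n) (-1)) ∨
      ∃ (Q : Subgroup Γ) (y : Γ), Nat.card Q = 2 ^ n ∧ IsQuaternionSubgroup Q y z := by
  have : Finite Γ := Nat.finite_of_card_ne_zero (by rw [hcard]; positivity)
  let S : Sylow 2 Γ := default
  have hS := natCard_sylow_two hcard S
  have hzS : z ∈ (S : Subgroup Γ) := hz.mem_of_even_card (hS ▸ dvd_pow_self 2 hn)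
  refine ((hz.subgroup hzS).isCyclic_or_exists_index_eq_two S.isPGroup').imp
    (nonempty_mulEquiv_metacyclic_of_isCyclic_sylow hn hcard hnil hcyc S) ?_
  rintro ⟨y, hindex, hy⟩
  have hmem (b : S) : b ∈ Subgroup.zpowers y ↔ (b : Γ) ∈ Subgroup.zpowers (y : Γ) := by
    simp only [Subgroup.mem_zpowers_iff, Subtype.ext_iff, SubgroupClass.coe_zpow]
  refine ⟨S, y, hS, y.2, ?_, fun b hb hby => ?_, fun b hb hby => ?_⟩
  · exact (congrArg Subgroup.index (Subgroup.ext fun b => (hmem b).symm)).trans hindex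
  · exact congrArg Subtype.val (hy ⟨b, hb⟩ (mt (hmem _).mp hby)).1
  · exact congrArg Subtype.val (hy ⟨b, hb⟩ (mt (hmem _).mp hby)).2

lemma PerfectOrderClasses.orderCount_four_dvd (hpoc : PerfectOrderClasses Γ)
    (hz : IsUniqueInvolution z) (hn : 2 ≤ n) (hcard : Nat.card Γ = 3 ^ e * 2 ^ n) :
    orderCount Γ 4 ∣ 2 * 3 ^ e := by
  have : Finite Γ := Nat.finite_of_card_ne_zero (by rw [hcard]; positivity)
  have hmod := hz.orderCount_four_mod (hcard ▸ (pow_dvd_pow 2 hn).mul_left _)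
  have hdvd := (hpoc 4 (by norm_num)).resolve_left (by omega)
  obtain ⟨f, hf⟩ : 2 ∣ orderCount Γ 4 := by omega
  have hfodd : Nat.Coprime f (2 ^ n) :=
    (Nat.coprime_two_right.mpr (Nat.odd_iff.mpr (by omega))).pow_right n
  rw [hcard, hf] at hdvd
  rw [hf]
  exact mul_dvd_mul_left 2 (hfodd.dvd_of_dvd_mul_right ((dvd_mul_left f 2).trans hdvd))

lemma zpow_eq_self_or_inv_of_odd {y : Γ} (hy : y ^ 4 = 1) {l : ℤ} (hl : Odd l) :
    y ^ l = y ∨ y ^ l = y⁻¹ := by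
  have hy' : y ^ (4 : ℤ) = 1 := by exact_mod_cast hy
  obtain ⟨c, rfl⟩ := hl
  rcases Int.even_or_odd' c with ⟨d, rfl | rfl⟩
  · left
    rw [show 2 * (2 * d) + 1 = 4 * d + 1 by ring, zpow_add_one, zpow_mul, hy', one_zpow, one_mul]
  · right
    rw [show 2 * (2 * d + 1) + 1 = 4 * (d + 1) - 1 by ring, zpow_sub_one, zpow_mul, hy', one_zpow,
      one_mul]

namespace IsQuaternionSubgroup

variable {Q : Subgroup Γ} {y : Γ}

lemma orderOf_add_two_le (h : IsQuaternionSubgroup Q y z) (hz : IsUniqueInvolution z)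
    (hpoc : PerfectOrderClasses Γ) (hn : 2 ≤ n) (hcard : Nat.card Γ = 3 ^ e * 2 ^ n)
    (hy : 4 ∣ orderOf y) : orderOf y + 2 ≤ 2 * 3 ^ e := by
  have : Finite Γ := Nat.finite_of_card_ne_zero (by rw [hcard]; positivity)
  exact h.orderCount_four hz hy ▸ (orderCount_subgroup_le Q 4).trans
    (Nat.le_of_dvd (by positivity) (hpoc.orderCount_four_dvd hz hn hcard))

lemma normal_of_orderOf_add_two_eq (h : IsQuaternionSubgroup Q y z) (hz : IsUniqueInvolution z)
    (hpoc : PerfectOrderClasses Γ) (hn : 2 ≤ n) (hcard : Nat.card Γ = 3 ^ e * 2 ^ n)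
    (hy : 4 ∣ orderOf y) (heq : orderOf y + 2 = 2 * 3 ^ e) : Q.Normal := by
  have : Finite Γ := Nat.finite_of_card_ne_zero (by rw [hcard]; positivity)
  refine h.normal hz fun x hx => mem_of_orderCount_le ?_ hx
  rw [h.orderCount_four hz hy, heq]
  exact Nat.le_of_dvd (by positivity) (hpoc.orderCount_four_dvd hz hn hcard)

lemma isNilpotent_of_natCard_eq (h : IsQuaternionSubgroup Q y z) (hQ : Q.Normal)
    (hcard : Nat.card Γ = 3 ^ e * 2 ^ n) (hQcard : Nat.card Q = 2 ^ n)
    {P : Subgroup Γ} (hP : Nat.card P = 3 ^ e)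
    (hPy : ∀ a ∈ P, a * y * a⁻¹ ∈ Subgroup.zpowers y) : Group.IsNilpotent Γ := by
  have : Finite Γ := Nat.finite_of_card_ne_zero (by rw [hcard]; positivity)
  have : Fact (Nat.Prime 3) := ⟨Nat.prime_three⟩
  have hodd : Odd (3 ^ e) := Odd.pow (by decide)
  obtain ⟨k, -, hk⟩ := (Nat.dvd_prime_pow Nat.prime_two).mp
    (hQcard ▸ Dvd.intro _ h.natCard_eq.symm : orderOf y ∣ 2 ^ n)
  refine h.isNilpotent hQ hk (IsPGroup.of_card hP).isNilpotent (hP ▸ hodd)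
    (Subgroup.isComplement'_of_coprime (by rw [hP, hQcard, hcard]) ?_) hPy
  rw [hP, hQcard]
  exact (Nat.coprime_two_right.mpr hodd).pow_right n

lemma inv (h : IsQuaternionSubgroup Q y z) : IsQuaternionSubgroup Q y⁻¹ z where
  mem := inv_mem h.mem
  relIndex_eq := by rw [Subgroup.zpowers_inv, h.relIndex_eq]
  semiconjBy b hb hby := by
    rw [Subgroup.zpowers_inv] at hby
    exact (h.semiconjBy b hb hby).inv_right
  sq_eq b hb hby := h.sq_eq b hb (by rwa [Subgroup.zpowers_inv] at hby)

lemma le_of_mem (h : IsQuaternionSubgroup Q y z) {T : Subgroup Γ} {b : Γ} (hyT : y ∈ T)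
    (hb : b ∈ Q) (hby : b ∉ Subgroup.zpowers y) (hbT : b ∈ T) : Q ≤ T := by
  intro x hx
  by_cases hxy : x ∈ Subgroup.zpowers y
  · exact Subgroup.zpowers_le.mpr hyT hxy
  · obtain ⟨i, rfl⟩ := h.exists_eq_zpow_mul hb hx hby hxy
    exact mul_mem (T.zpow_mem hyT i) hbT

variable {a : Γ}

lemma nonempty_mulEquiv_specialLinearGroup_of_conj_eq (h : IsQuaternionSubgroup Q y z)
    (hz : IsUniqueInvolution z) (hQ : Q.Normal) (hcard : Nat.card Γ = 24) (hy : orderOf y = 4)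
    (ha : orderOf a = 3) (hay : a * y * a⁻¹ ∉ Subgroup.zpowers y)
    (hk : a * (a * y * a⁻¹) * a⁻¹ = y * (a * y * a⁻¹)) :
    Nonempty (Γ ≃* Matrix.SpecialLinearGroup (Fin 2) (ZMod 3)) := by
  have : Finite Γ := Nat.finite_of_card_ne_zero (by omega)
  have hj : a * y * a⁻¹ ∈ Q := hQ.conj_mem y h.mem a
  refine SLTwoThree.nonempty_mulEquiv hcard (i := y) (j := a * y * a⁻¹) (a := a)
    (hy ▸ pow_orderOf_eq_one y) ?_ (h.semiconjBy _ hj hay) (eq_mul_inv_iff_mul_eq.mp rfl).symm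
    (eq_mul_inv_iff_mul_eq.mp hk.symm).symm (ha ▸ pow_orderOf_eq_one a) ?_
  · rw [h.sq_eq _ hj hay, hz.orderOf_eq_four_iff.mp hy]
  · have hymem : y ∈ Subgroup.closure {y, a} := Subgroup.subset_closure (Set.mem_insert _ _)
    have hamem : a ∈ Subgroup.closure {y, a} :=
      Subgroup.subset_closure (Set.mem_insert_of_mem _ rfl)
    have hQcard : Nat.card Q = 8 := by rw [h.natCard_eq, hy]
    have hcompl : Q.IsComplement' (Subgroup.zpowers a) :=
      Subgroup.isComplement'_of_coprime (by rw [hQcard, Nat.card_zpowers, ha, hcard])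
        (by rw [hQcard, Nat.card_zpowers, ha]; decide)
    rw [eq_top_iff, ← hcompl.sup_eq_top, sup_le_iff, Subgroup.zpowers_le]
    exact ⟨h.le_of_mem hymem hj hay (mul_mem (mul_mem hamem hymem) (inv_mem hamem)), hamem⟩

lemma nonempty_mulEquiv_specialLinearGroup (h : IsQuaternionSubgroup Q y z)
    (hz : IsUniqueInvolution z) (hQ : Q.Normal) (hcard : Nat.card Γ = 24) (hy : orderOf y = 4)
    (ha : orderOf a = 3) (hay : a * y * a⁻¹ ∉ Subgroup.zpowers y) :
    Nonempty (Γ ≃* Matrix.SpecialLinearGroup (Fin 2) (ZMod 3)) := by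
  have ha3 : a ^ 3 = 1 := ha ▸ pow_orderOf_eq_one a
  set j := a * y * a⁻¹ with hj
  have hjQ : j ∈ Q := hQ.conj_mem y h.mem a
  have hky : a * j * a⁻¹ ∉ Subgroup.zpowers y := by
    rintro ⟨u, hu : y ^ u = a * j * a⁻¹⟩
    have hsemi : SemiconjBy (a ^ 2) y (y ^ u) := by
      rw [hu, hj, pow_two, SemiconjBy]
      group
    have := semiconjBy_pow_zpow_pow hsemi 2
    rw [← pow_mul, pow_succ a 3, ha3, one_mul] at this
    exact hay ⟨u ^ 2, eq_mul_inv_iff_mul_eq.mpr this.symm⟩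
  have hkj : a * j * a⁻¹ ∉ Subgroup.zpowers j := by
    rintro ⟨u, hu : j ^ u = a * j * a⁻¹⟩
    nth_rw 1 [hj] at hu
    rw [conj_zpow] at hu
    exact hay ⟨u, mul_left_cancel (mul_right_cancel hu)⟩
  obtain ⟨l, hl⟩ := h.exists_eq_zpow_mul hjQ (hQ.conj_mem j hjQ a) hay hky
  have hy2 : y ^ 2 = j ^ 2 := by rw [hz.orderOf_eq_four_iff.mp hy, h.sq_eq j hjQ hay]
  have hodd : Odd l := by
    rw [← Int.not_even_iff_odd]
    rintro ⟨c, rfl⟩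
    refine hkj (Subgroup.mem_zpowers_iff.mpr ⟨2 * c + 1, ?_⟩)
    rw [hl, ← two_mul, zpow_mul, zpow_ofNat, hy2, zpow_add_one, zpow_mul, zpow_ofNat]
  rcases zpow_eq_self_or_inv_of_odd (hy ▸ pow_orderOf_eq_one y) hodd with hyl | hyl
  · exact h.nonempty_mulEquiv_specialLinearGroup_of_conj_eq hz hQ hcard hy ha hay (by rw [hl, hyl])
  · have hjinv : a * y⁻¹ * a⁻¹ = j⁻¹ := by rw [hj, conj_inv]
    refine h.inv.nonempty_mulEquiv_specialLinearGroup_of_conj_eq hz hQ hcard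
      (by rw [orderOf_inv, hy]) ha (by rwa [hjinv, Subgroup.zpowers_inv, inv_mem_iff]) ?_
    have hjy : SemiconjBy j⁻¹ y y⁻¹ := by
      simpa only [inv_inv] using (h.semiconjBy j hjQ hay).inv_symm_left.inv_right
    rw [hjinv, ← conj_inv, hl, hyl, mul_inv_rev, inv_inv, hjy.eq]

end IsQuaternionSubgroup

lemma isCyclic_of_natCard_eq_three (P : Subgroup Γ) (hP : Nat.card P = 3 ^ 1) : IsCyclic P := by
  have : Fact (Nat.Prime 3) := ⟨Nat.prime_three⟩
  exact isCyclic_of_prime_card (p := 3) (by rw [hP, pow_one])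

lemma IsUniqueInvolution.nonempty_mulEquiv_of_natCard_eq_24 (hz : IsUniqueInvolution z)
    (hcard : Nat.card Γ = 24) (hpoc : PerfectOrderClasses Γ) (hnil : ¬ Group.IsNilpotent Γ) :
    Nonempty (Γ ≃* Matrix.SpecialLinearGroup (Fin 2) (ZMod 3)) ∨
      Nonempty (Γ ≃* Metacyclic 3 8 (-1)) := by
  have hcard' : Nat.card Γ = 3 ^ 1 * 2 ^ 3 := hcard
  have : Fact (Nat.Prime 3) := ⟨Nat.prime_three⟩
  have : Finite Γ := Nat.finite_of_card_ne_zero (by omega)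
  rcases hz.nonempty_mulEquiv_metacyclic_or_exists_isQuaternionSubgroup (by norm_num) hcard' hnil
    isCyclic_of_natCard_eq_three with hmeta | ⟨Q, y, hQcard, hq⟩
  · exact Or.inr hmeta
  · left
    have hy : orderOf y = 4 := by have := hq.natCard_eq; omega
    have hQ := hq.normal_of_orderOf_add_two_eq hz hpoc (by norm_num) hcard' (by omega) (by omega)
    obtain ⟨c, hc⟩ := exists_prime_orderOf_dvd_card' (G := Γ) 3 (by omega)
    obtain ⟨a, ha, hay⟩ : ∃ a ∈ Subgroup.zpowers c, a * y * a⁻¹ ∉ Subgroup.zpowers y := by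
      by_contra! hcon
      exact hnil (hq.isNilpotent_of_natCard_eq hQ hcard' hQcard (Nat.card_zpowers c ▸ hc) hcon)
    refine hq.nonempty_mulEquiv_specialLinearGroup hz hQ hcard hy ?_ hay
    refine ((Nat.dvd_prime Nat.prime_three).mp (hc ▸ orderOf_dvd_of_mem_zpowers ha)).resolve_left ?_
    rw [orderOf_eq_one_iff]
    rintro rfl
    exact hay (by simp)

lemma IsUniqueInvolution.nonempty_mulEquiv_of_natCard_eq_48 (hz : IsUniqueInvolution z)
    (hcard : Nat.card Γ = 48) (hpoc : PerfectOrderClasses Γ) (hnil : ¬ Group.IsNilpotent Γ) :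
    Nonempty (Γ ≃* Metacyclic 3 16 (-1)) := by
  have hcard' : Nat.card Γ = 3 ^ 1 * 2 ^ 4 := hcard
  refine (hz.nonempty_mulEquiv_metacyclic_or_exists_isQuaternionSubgroup (by norm_num) hcard' hnil
    isCyclic_of_natCard_eq_three).resolve_right ?_
  rintro ⟨Q, y, hQcard, hq⟩
  have hy : orderOf y = 8 := by have := hq.natCard_eq; omega
  have := hq.orderOf_add_two_le hz hpoc (by norm_num) hcard' (by omega)
  omega

lemma IsUniqueInvolution.nonempty_mulEquiv_of_natCard_eq_288 (hz : IsUniqueInvolution z)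
    (hcard : Nat.card Γ = 288) (hpoc : PerfectOrderClasses Γ) (hnil : ¬ Group.IsNilpotent Γ)
    (hcyc : ∀ P : Subgroup Γ, Nat.card P = 3 ^ 2 → IsCyclic P) :
    Nonempty (Γ ≃* Metacyclic 9 32 (-1)) := by
  have hcard' : Nat.card Γ = 3 ^ 2 * 2 ^ 5 := hcard
  have : Finite Γ := Nat.finite_of_card_ne_zero (by omega)
  have : Fact (Nat.Prime 3) := ⟨Nat.prime_three⟩
  refine (hz.nonempty_mulEquiv_metacyclic_or_exists_isQuaternionSubgroup (by norm_num) hcard' hnil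
    hcyc).resolve_right ?_
  rintro ⟨Q, y, hQcard, hq⟩
  have hy : orderOf y = 16 := by have := hq.natCard_eq; omega
  have hQ := hq.normal_of_orderOf_add_two_eq hz hpoc (by norm_num) hcard' (by omega) (by omega)
  obtain ⟨P, hP⟩ := Sylow.exists_subgroup_card_pow_prime (G := Γ) 3 (n := 2) (by omega)
  refine hnil (hq.isNilpotent_of_natCard_eq hQ hcard' hQcard hP fun a _ => ?_)
  -- Elements of `Q` outside `⟨y⟩` have order 4, whereas conjugates of `y` have order 16.
  by_contra hay
  have h4 := hz.orderOf_eq_four_iff.mpr (hq.sq_eq _ (hQ.conj_mem y hq.mem a) hay)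
  have h16 := MulEquiv.orderOf_eq (MulAut.conj a) y
  rw [MulAut.conj_apply] at h16
  omega

end ComplementOrders

/-! ### Fixed-point-free semidirect products -/

section OrderCountEquiv

variable {A B : Type*} [Group A] [Group B]

lemma orderCount_congr (e : A ≃* B) (n : ℕ) : orderCount A n = orderCount B n :=
  Nat.card_congr <| e.toEquiv.subtypeEquiv fun a => by
    rw [MulEquiv.toEquiv_eq_coe, MulEquiv.coe_toEquiv, MulEquiv.orderOf_eq]

lemma PerfectOrderClasses.congr (e : A ≃* B) (h : PerfectOrderClasses A) :
    PerfectOrderClasses B := fun n hn => by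
  rw [← orderCount_congr e, ← Nat.card_congr e.toEquiv]
  exact h n hn

lemma orderCount_one (A : Type*) [Group A] : orderCount A 1 = 1 := by
  simp only [orderCount, orderOf_eq_one_iff]
  exact Nat.card_unique

end OrderCountEquiv

section FixedPointFree

variable {N C : Type*} [Group N] [Group C]

/-- The action `φ` of `C` on `N` is fixed-point-free, that is, `N ⋊[φ] C` is a Frobenius group
when `N` and `C` are nontrivial. -/
def IsFixedPointFree (φ : C →* MulAut N) : Prop :=
  ∀ h : C, h ≠ 1 → ∀ x : N, x ≠ 1 → φ h x ≠ x

namespace IsFixedPointFree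

variable {φ : C →* MulAut N}

lemma eq_one (hφ : IsFixedPointFree φ) {h : C} {x : N} (hx : x ≠ 1) (hfix : φ h x = x) :
    h = 1 := by
  by_contra hh
  exact hφ h hh x hx hfix

lemma fixedPointFree (hφ : IsFixedPointFree φ) {h : C} (hh : h ≠ 1) :
    MonoidHom.FixedPointFree (φ h) := fun x hfix => by
  by_contra hx
  exact hφ h hh x hx hfix

lemma injective_apply (hφ : IsFixedPointFree φ) {x : N} (hx : x ≠ 1) :
    Function.Injective fun c => φ c x := by
  intro c d (h : φ c x = φ d x)
  have hfix : φ (d⁻¹ * c) x = x := by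
    rw [map_mul, MulAut.mul_apply, h, ← MulAut.mul_apply, ← map_mul, inv_mul_cancel, map_one,
      MulAut.one_apply]
  exact (inv_mul_eq_one.mp (hφ.eq_one hx hfix)).symm

lemma natCard_dvd (hφ : IsFixedPointFree φ) {p : N → Prop} (hp : ∀ c x, p x → p (φ c x))
    (hp1 : ¬ p 1) : Nat.card C ∣ Nat.card {x // p x} := by
  let _ : MulAction C N := MulAction.compHom N φ
  let S : SubMulAction C N := ⟨{x | p x}, fun c {x} hx => hp c x hx⟩
  have hstab : ∀ x : S, MulAction.stabilizer C x = ⊥ := fun x => by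
    rw [eq_bot_iff]
    intro c hc
    exact hφ.eq_one (fun h => hp1 (h ▸ x.2))
      (congrArg Subtype.val (MulAction.mem_stabilizer_iff.mp hc))
  change _ ∣ Nat.card S
  rw [Nat.card_congr (MulAction.selfEquivOrbitsQuotientProd hstab), Nat.card_prod]
  exact dvd_mul_left _ _

lemma natCard_dvd_orderCount (hφ : IsFixedPointFree φ) {n : ℕ} (hn : n ≠ 1) :
    Nat.card C ∣ orderCount N n :=
  hφ.natCard_dvd (fun c x hx => by rw [MulEquiv.orderOf_eq, hx])
    (by rw [orderOf_one]; exact hn.symm)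

lemma exists_apply_eq_of_orderCount_eq (hφ : IsFixedPointFree φ) [Finite C] {n : ℕ} (hn : n ≠ 1)
    (hcard : orderCount N n = Nat.card C) {x y : N} (hx : orderOf x = n) (hy : orderOf y = n) :
    ∃ c, φ c x = y := by
  let f : C → {w : N // orderOf w = n} := fun c => ⟨φ c x, by rw [MulEquiv.orderOf_eq, hx]⟩
  have hf : Function.Injective f := fun c d h =>
    hφ.injective_apply (fun h1 => hn (by rw [← hx, h1, orderOf_one])) (congrArg Subtype.val h)
  have hfin : Finite {w : N // orderOf w = n} :=
    Nat.finite_of_card_ne_zero (hcard.trans_ne Nat.card_pos.ne')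
  obtain ⟨c, hc⟩ := ((Nat.bijective_iff_injective_and_card f).mpr ⟨hf, hcard.symm⟩).2 ⟨y, hy⟩
  exact ⟨c, congrArg Subtype.val hc⟩

variable [Finite N]

lemma coe_eq_inv_of_sq_eq_one (hφ : IsFixedPointFree φ) {c : C} (hc : c ^ 2 = 1)
    (hc1 : c ≠ 1) : ⇑(φ c) = (·⁻¹) :=
  (hφ.fixedPointFree hc1).coe_eq_inv_of_involutive fun x => by
    rw [← MulAut.mul_apply, ← map_mul, ← pow_two, hc, map_one, MulAut.one_apply]

lemma isUniqueInvolution [Nontrivial N] (hφ : IsFixedPointFree φ) {z : C} (hz : orderOf z = 2) :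
    IsUniqueInvolution z := by
  have hz1 : z ≠ 1 := fun h => by simp [h] at hz
  have hz2 : z ^ 2 = 1 := hz ▸ pow_orderOf_eq_one z
  refine ⟨hz1, fun x => ⟨fun hx => or_iff_not_imp_left.mpr fun hx1 => ?_, ?_⟩⟩
  · obtain ⟨g, hg⟩ := exists_ne (1 : N)
    refine hφ.injective_apply hg ?_
    simp only [hφ.coe_eq_inv_of_sq_eq_one hx hx1, hφ.coe_eq_inv_of_sq_eq_one hz2 hz1]
  · rintro (rfl | rfl)
    · exact one_pow 2
    · exact hz2

lemma mul_comm_of_orderOf_eq_two (hφ : IsFixedPointFree φ) {z : C} (hz : orderOf z = 2) (x y : N) :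
    x * y = y * x := by
  have hz1 : z ≠ 1 := fun h => by simp [h] at hz
  have hinv := hφ.coe_eq_inv_of_sq_eq_one (orderOf_dvd_iff_pow_eq_one.mp hz.dvd) hz1
  refine (hφ.fixedPointFree hz1).commute_all_of_involutive ?_ x y
  rw [hinv]
  exact inv_involutive

lemma coprime_natCard (hφ : IsFixedPointFree φ) : (Nat.card N).Coprime (Nat.card C) := by
  classical
  obtain ⟨c, hc⟩ := hφ.natCard_dvd (p := (· ≠ 1)) (fun c x hx => by simpa using hx) (by simp)
  have hN : Nat.card N = Nat.card {x : N // x ≠ 1} + 1 := by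
    rw [Nat.card_congr (Equiv.sumCompl fun x : N => x ≠ 1).symm, Nat.card_sum]
    simp
  rw [hN, hc]
  simp

lemma orderOf_eq_orderOf_right (hφ : IsFixedPointFree φ) {x : N ⋊[φ] C} (hx : x.right ≠ 1) :
    orderOf x = orderOf x.right := by
  obtain ⟨u, hu⟩ := (hφ.fixedPointFree hx).commutatorMap_surjective x.left
  have hconj : x = MulAut.conj (SemidirectProduct.inl u) (SemidirectProduct.inr x.right) := by
    rw [MulAut.conj_apply]
    ext <;> simp [← hu, div_eq_mul_inv]
  rw [hconj, MulEquiv.orderOf_eq, orderOf_injective _ SemidirectProduct.inr_injective]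
  simp

lemma orderCount_eq_zero_or (hφ : IsFixedPointFree φ) {n : ℕ} (hn : n ≠ 1) :
    orderCount N n = 0 ∨ orderCount C n = 0 := by
  by_contra! h
  exact hn (Nat.eq_one_of_dvd_coprimes hφ.coprime_natCard
    (not_imp_comm.mp orderCount_eq_zero h.1) (not_imp_comm.mp orderCount_eq_zero h.2))

variable [Finite C]

lemma orderCount_semidirectProduct (hφ : IsFixedPointFree φ) {n : ℕ} (hn : n ≠ 1) :
    orderCount (N ⋊[φ] C) n = orderCount N n + Nat.card N * orderCount C n := by
  have : Finite (N ⋊[φ] C) := Finite.of_equiv _ SemidirectProduct.equivProd.symm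
  have hmem (x : N ⋊[φ] C) : x ∉ (SemidirectProduct.inl : N →* N ⋊[φ] C).range ↔ x.right ≠ 1 := by
    rw [SemidirectProduct.range_inl_eq_ker_rightHom, MonoidHom.mem_ker]
    rfl
  rw [orderCount_eq_add (SemidirectProduct.inl : N →* N ⋊[φ] C).range,
    ← orderCount_congr (MonoidHom.ofInjective (SemidirectProduct.inl_injective (φ := φ))),
    orderCount.eq_def C, ← Nat.card_prod]
  congr 1
  refine Nat.card_congr
    { toFun x := ⟨x.1.left, x.1.right, ?_⟩
      invFun p := ⟨⟨p.1, p.2.1⟩, ?_⟩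
      left_inv _ := rfl
      right_inv _ := rfl }
  · rw [← hφ.orderOf_eq_orderOf_right ((hmem _).mp x.2.1), x.2.2]
  · have hright : p.2.1 ≠ 1 := fun h => hn (by rw [← p.2.2, h, orderOf_one])
    exact ⟨(hmem _).mpr hright, by rw [hφ.orderOf_eq_orderOf_right hright]; exact p.2.2⟩

lemma perfectOrderClasses_semidirectProduct_iff (hφ : IsFixedPointFree φ) :
    PerfectOrderClasses (N ⋊[φ] C) ↔ PerfectOrderClasses C ∧
      ∀ n, 0 < n → orderCount N n = 0 ∨ orderCount N n ∣ Nat.card N * Nat.card C := by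
  simp only [PerfectOrderClasses, ← forall_and]
  refine forall₂_congr fun n _ => ?_
  rcases eq_or_ne n 1 with rfl | hn
  · simp [orderCount_one]
  have hN : Nat.card N ≠ 0 := Nat.card_pos.ne'
  rw [hφ.orderCount_semidirectProduct hn, SemidirectProduct.card]
  rcases hφ.orderCount_eq_zero_or hn with h | h
  · simp [h, hN, Nat.mul_dvd_mul_iff_left (Nat.pos_of_ne_zero hN)]
  · simp [h]

end IsFixedPointFree

lemma IsoFrobSdp.of_mulEquiv {G N' C' : Type*} [Group G] [Group N'] [Group C']
    {φ : C →* MulAut N} (hφ : IsFixedPointFree φ) (e : G ≃* N ⋊[φ] C) (eN : N ≃* N')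
    (eC : C ≃* C') : IsoFrobSdp G N' C' := by
  refine ⟨_, fun h hh x hx hfix => ?_, ⟨e.trans (SemidirectProduct.congr' eN eC)⟩⟩
  refine hφ (eC.symm h) (by simpa using hh) (eN.symm x) (by simpa using hx) ?_
  rw [MulEquiv.eq_symm_apply]
  simpa using hfix

lemma IsFrobeniusWith.exists_isFixedPointFree {G : Type*} [Group G] {K H : Subgroup G}
    (h : IsFrobeniusWith K H) :
    ∃ φ : H →* MulAut K, IsFixedPointFree φ ∧ Nonempty (G ≃* K ⋊[φ] H) := by
  obtain ⟨-, -, hK, hdisj, hgen, hfree⟩ := h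
  have hcompl : K.IsComplement' H := by
    refine Subgroup.isComplement'_of_disjoint_and_mul_eq_univ (disjoint_iff.mpr hdisj) ?_
    refine Set.eq_univ_of_forall fun g => ?_
    obtain ⟨k, hk, l, hl, rfl⟩ := hgen g
    exact Set.mul_mem_mul hk hl
  refine ⟨_, fun l hl k hk hfix => ?_, ⟨(SemidirectProduct.mulEquivSubgroup hcompl).symm⟩⟩
  exact hfree l l.2 (by simpa using hl) k k.2 (by simpa using hk) (congrArg Subtype.val hfix)

end FixedPointFree

/-! ### Abelian kernels -/

section Torsion

lemma sum_divisors_orderCount (Γ : Type*) [Group Γ] [Finite Γ] {n : ℕ} (hn : n ≠ 0) :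
    ∑ d ∈ n.divisors, orderCount Γ d = Nat.card {x : Γ // x ^ n = 1} := by
  classical
  have := Fintype.ofFinite Γ
  simp only [orderCount, Nat.card_eq_fintype_card, Fintype.card_subtype]
  exact sum_card_orderOf_eq_card_pow_eq_one hn

variable {p : ℕ} [hp : Fact p.Prime]

lemma natCard_pow_prime_pow_succ_eq_one (Γ : Type*) [Group Γ] [Finite Γ] (j : ℕ) :
    Nat.card {x : Γ // x ^ p ^ (j + 1) = 1} =
      Nat.card {x : Γ // x ^ p ^ j = 1} + orderCount Γ (p ^ (j + 1)) := by
  simp only [← sum_divisors_orderCount Γ (pow_ne_zero _ hp.out.ne_zero),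
    Nat.sum_divisors_prime_pow hp.out, Finset.sum_range_succ]

lemma natCard_pow_prime_eq_one (Γ : Type*) [Group Γ] [Finite Γ] :
    Nat.card {x : Γ // x ^ p = 1} = orderCount Γ p + 1 := by
  simpa [add_comm] using natCard_pow_prime_pow_succ_eq_one (p := p) Γ 0

lemma exists_orderCount_add_one_eq {N : Type*} [CommGroup N] [Finite N] (hN : IsPGroup p N) :
    ∃ r, orderCount N p + 1 = p ^ r := by
  obtain ⟨r, hr⟩ := IsPGroup.iff_card.mp (hN.to_subgroup (powMonoidHom p : N →* N).ker)
  exact ⟨r, (natCard_pow_prime_eq_one N).symm.trans hr⟩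

lemma natCard_pi_pow_eq_one (ι A : Type*) [Fintype ι] [CommGroup A] [IsCyclic A] [Finite A]
    (n : ℕ) : Nat.card {x : ι → A // x ^ n = 1} = (Nat.card A).gcd n ^ Fintype.card ι := by
  rw [← IsCyclic.card_powMonoidHom_ker A n, ← Nat.card_eq_fintype_card, ← Nat.card_fun]
  refine Nat.card_congr ((Equiv.subtypeEquivRight fun x => ?_).trans
    (Equiv.subtypePiEquivPi (p := fun _ a => a ∈ (powMonoidHom n : A →* A).ker)))
  simp [funext_iff, MonoidHom.mem_ker]

end Torsion

lemma orderCount_mul_of_coprime {N : Type*} [CommGroup N] [Finite N] {m n : ℕ} (hm : 0 < m)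
    (hn : 0 < n) (h : m.Coprime n) : orderCount N (m * n) = orderCount N m * orderCount N n := by
  obtain ⟨s, hsm, hsn⟩ := Nat.chineseRemainder h 1 0
  obtain ⟨t, htm, htn⟩ := Nat.chineseRemainder h 0 1
  have horder {x : N} (hx : orderOf x = m * n) : orderOf (x ^ s) = m ∧ orderOf (x ^ t) = n := by
    rw [orderOf_pow, orderOf_pow, hx, Nat.gcd_comm, h.gcd_mul, hsm.gcd_eq, hsn.gcd_eq,
      Nat.gcd_comm _ t, h.gcd_mul, htm.gcd_eq, htn.gcd_eq]
    simp [hm, hn]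
  have hpow {x y : N} (hx : orderOf x = m) (hy : orderOf y = n) :
      (x * y) ^ s = x ∧ (x * y) ^ t = y := by
    rw [← hx] at hsm htm
    rw [← hy] at hsn htn
    rw [mul_pow, mul_pow, pow_eq_pow_iff_modEq.mpr hsm, pow_eq_pow_iff_modEq.mpr hsn,
      pow_eq_pow_iff_modEq.mpr htm, pow_eq_pow_iff_modEq.mpr htn]
    simp
  have hsum : s + t ≡ 1 [MOD m * n] :=
    (Nat.modEq_and_modEq_iff_modEq_mul h).mp ⟨hsm.add htm, hsn.add htn⟩
  rw [orderCount, orderCount, orderCount, ← Nat.card_prod]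
  exact Nat.card_congr
    { toFun x := (⟨x.1 ^ s, (horder x.2).1⟩, ⟨x.1 ^ t, (horder x.2).2⟩)
      invFun u := ⟨u.1.1 * u.2.1, by
        rw [(Commute.all _ _).orderOf_mul_eq_mul_orderOf_of_coprime
          (by rwa [u.1.2, u.2.2]), u.1.2, u.2.2]⟩
      left_inv x := Subtype.ext <| by
        change x.1 ^ s * x.1 ^ t = x.1
        nth_rw 3 [← pow_one x.1]
        rw [← pow_add, pow_eq_pow_iff_modEq, x.2]
        exact hsum
      right_inv u := by ext <;> simp [hpow u.1.2 u.2.2] }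

section Homocyclic

variable {N : Type*} [CommGroup N] {p : ℕ} [hp : Fact p.Prime]

lemma orderOf_mulSingle_ofAdd_one {ι : Type*} [DecidableEq ι] (n : ι → ℕ) (i : ι) :
    orderOf (Pi.mulSingle i (Multiplicative.ofAdd 1) : ∀ i, Multiplicative (ZMod (n i))) = n i := by
  rw [orderOf_piMulSingle, orderOf_ofAdd_eq_addOrderOf, ZMod.addOrderOf_one]

lemma exponent_le_of_forall_exists_mulAut {ι : Type*} {k : ι → ℕ}
    (e : N ≃* ∀ i, Multiplicative (ZMod (p ^ k i)))
    (htrans : ∀ x y : N, orderOf x = p → orderOf y = p → ∃ f : MulAut N, f x = y)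
    {i j : ι} (hi : k i ≠ 0) (hj : k j ≠ 0) : k i ≤ k j := by
  classical
  let x (i : ι) : N := e.symm (Pi.mulSingle i (Multiplicative.ofAdd 1))
  have hx (i : ι) : orderOf (x i) = p ^ k i := by
    rw [MulEquiv.orderOf_eq, orderOf_mulSingle_ofAdd_one fun i => p ^ k i]
  have hxp {i : ι} (hi : k i ≠ 0) : orderOf (x i ^ p ^ (k i - 1)) = p := by
    rw [orderOf_pow_of_dvd (pow_ne_zero _ hp.out.ne_zero)
      (hx i ▸ pow_dvd_pow p (Nat.sub_le _ _)), hx, Nat.pow_div (Nat.sub_le _ _) hp.out.pos,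
      Nat.sub_sub_self (Nat.one_le_iff_ne_zero.mpr hi), pow_one]
  obtain ⟨f, hf⟩ := htrans _ _ (hxp hi) (hxp hj)
  by_contra! hlt
  have hleft : e (f (x i ^ p ^ (k i - 1))) j = 1 := by
    have hcard : Nat.card (Multiplicative (ZMod (p ^ k j))) = p ^ k j := by simp
    rw [map_pow, map_pow, Pi.pow_apply, ← orderOf_dvd_iff_pow_eq_one]
    exact (hcard ▸ orderOf_dvd_natCard _).trans (pow_dvd_pow p (by omega))
  have hright : e (x j ^ p ^ (k j - 1)) = Pi.mulSingle j (e (x j ^ p ^ (k j - 1)) j) := by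
    rw [map_pow, MulEquiv.apply_symm_apply, ← Pi.mulSingle_pow, Pi.mulSingle_eq_same]
  rw [← hf, hleft, Pi.mulSingle_one, EmbeddingLike.map_eq_one_iff, hf] at hright
  exact hp.out.ne_one (by rw [← hxp hj, hright, orderOf_one])

lemma exists_mulEquiv_of_forall_exists_mulAut [Finite N] [Nontrivial N] (hN : IsPGroup p N) {r : ℕ}
    (hr : orderCount N p + 1 = p ^ r)
    (htrans : ∀ x y : N, orderOf x = p → orderOf y = p → ∃ f : MulAut N, f x = y) :
    ∃ k, 0 < k ∧ Nonempty (N ≃* (Fin r → Multiplicative (ZMod (p ^ k)))) := by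
  classical
  obtain ⟨ι, _, n, hn, ⟨e⟩⟩ := CommGroup.equiv_prod_multiplicative_zmod_of_finite N
  have hpow (i : ι) : ∃ k, n i = p ^ k := by
    obtain ⟨k, hk⟩ := IsPGroup.iff_orderOf.mp hN
      (e.symm (Pi.mulSingle i (Multiplicative.ofAdd 1)))
    exact ⟨k, by rw [← hk, MulEquiv.orderOf_eq, orderOf_mulSingle_ofAdd_one]⟩
  choose k hk using hpow
  obtain rfl : n = fun i => p ^ k i := funext hk
  have hk0 (i : ι) : k i ≠ 0 := fun h => by simpa [h] using hn i
  obtain ⟨i₀⟩ : Nonempty ι := by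
    by_contra! h
    exact not_subsingleton N e.toEquiv.subsingleton
  obtain ⟨k, rfl⟩ : ∃ l, k = fun _ => l := ⟨k i₀, funext fun i => le_antisymm
    (exponent_le_of_forall_exists_mulAut e htrans (hk0 _) (hk0 _))
    (exponent_le_of_forall_exists_mulAut e htrans (hk0 _) (hk0 _))⟩
  have : NeZero (p ^ k) := ⟨pow_ne_zero _ hp.out.ne_zero⟩
  have hcard : Fintype.card ι = r := by
    refine Nat.pow_right_injective hp.out.two_le ?_
    dsimp only
    rw [← hr, orderCount_congr e, ← natCard_pow_prime_eq_one, natCard_pi_pow_eq_one]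
    simp [Nat.gcd_eq_right (dvd_pow_self p (hk0 i₀))]
  exact ⟨k, Nat.pos_of_ne_zero (hk0 i₀),
    ⟨e.trans (MulEquiv.arrowCongr (Fintype.equivFinOfCardEq hcard) (MulEquiv.refl _))⟩⟩

end Homocyclic

/-! ### Perfect order classes and the structure of the kernel -/

lemma orderCount_pos_of_dvd {Γ : Type*} [Group Γ] [Finite Γ] {p : ℕ} [Fact p.Prime]
    (h : p ∣ Nat.card Γ) : 0 < orderCount Γ p := by
  obtain ⟨x, hx⟩ := exists_prime_orderOf_dvd_card' p h
  have : Nonempty {g : Γ // orderOf g = p} := ⟨x, hx⟩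
  exact Nat.card_pos

lemma dvd_natCard_of_not_isNilpotent {Γ : Type*} [Group Γ] [Finite Γ]
    (hnil : ¬ Group.IsNilpotent Γ) {p q : ℕ} (hp : p.Prime)
    (hdiv : ∀ l : ℕ, l.Prime → l ∣ Nat.card Γ → l = p ∨ l = q) : q ∣ Nat.card Γ := by
  by_contra hq
  have hcard : Nat.card Γ = p ^ (Nat.card Γ).primeFactorsList.length :=
    Nat.eq_prime_pow_of_unique_prime_dvd Nat.card_pos.ne' fun {l} hl hdvd =>
      (hdiv l hl hdvd).resolve_right fun h => hq (h ▸ hdvd)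
  have : Fact p.Prime := ⟨hp⟩
  exact hnil (IsPGroup.of_card hcard).isNilpotent

namespace IsFixedPointFree

section PerfectOrderClasses

variable {N C : Type*} [CommGroup N] [Group C] [Finite N] [Finite C] {φ : C →* MulAut N}

-- If `q ≠ p` also divided `|N|`, then `|C|²` would divide `f_p f_q = f_{pq}`, hence `|N| |C|`.
lemma isPGroup {p : ℕ} [hp : Fact p.Prime] [Nontrivial C] (hφ : IsFixedPointFree φ)
    (hN : ∀ n, 0 < n → orderCount N n = 0 ∨ orderCount N n ∣ Nat.card N * Nat.card C)
    (hpN : p ∣ Nat.card N) : IsPGroup p N := by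
  refine IsPGroup.of_card (Nat.eq_prime_pow_of_unique_prime_dvd Nat.card_pos.ne' ?_)
  intro q hq hqN
  by_contra hqp
  have : Fact q.Prime := ⟨hq⟩
  have hpq := orderCount_mul_of_coprime (N := N) hp.out.pos hq.pos
    ((Nat.coprime_primes hp.out hq).mpr (Ne.symm hqp))
  have hpq0 : orderCount N (p * q) ≠ 0 := by
    rw [hpq]
    exact (Nat.mul_pos (orderCount_pos_of_dvd hpN) (orderCount_pos_of_dvd hqN)).ne'
  have hsq : Nat.card C * Nat.card C ∣ Nat.card N * Nat.card C :=
    (mul_dvd_mul (hφ.natCard_dvd_orderCount hp.out.ne_one)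
      (hφ.natCard_dvd_orderCount hq.ne_one)).trans
      (hpq ▸ (hN _ (Nat.mul_pos hp.out.pos hq.pos)).resolve_left hpq0)
  have hCN : Nat.card C ∣ Nat.card N := Nat.dvd_of_mul_dvd_mul_right Nat.card_pos hsq
  exact Finite.one_lt_card.ne' (hφ.coprime_natCard.symm.eq_one_of_dvd hCN)

-- The quotient `f_p / |C|` divides `|N|`, a power of `p`, while `f_p ≡ -1` modulo `p`.
lemma orderCount_eq_natCard {p : ℕ} [hp : Fact p.Prime] (hφ : IsFixedPointFree φ)
    (hN : ∀ n, 0 < n → orderCount N n = 0 ∨ orderCount N n ∣ Nat.card N * Nat.card C)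
    (hpN : p ∣ Nat.card N) (hNp : IsPGroup p N) : orderCount N p = Nat.card C := by
  have hpos := orderCount_pos_of_dvd hpN
  obtain ⟨c, hc⟩ := hφ.natCard_dvd_orderCount hp.out.ne_one
  have hcop : p.Coprime c := by
    obtain ⟨r, hr⟩ := exists_orderCount_add_one_eq hNp
    have hr0 : r ≠ 0 := by
      rintro rfl
      rw [pow_zero] at hr
      omega
    refine (hp.out.coprime_iff_not_dvd).mpr fun hpc => hp.out.not_dvd_one ?_
    exact (Nat.dvd_add_right (hc ▸ hpc.mul_left (Nat.card C))).mp (hr ▸ dvd_pow_self p hr0)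
  have hcN : c ∣ Nat.card N := by
    have hdvd := (hN p hp.out.pos).resolve_left hpos.ne'
    rw [hc, mul_comm] at hdvd
    exact Nat.dvd_of_mul_dvd_mul_right Nat.card_pos hdvd
  obtain ⟨m, hm⟩ := IsPGroup.iff_card.mp hNp
  rw [hc, (hcop.symm.pow_right m).eq_one_of_dvd (hm ▸ hcN), mul_one]

theorem exists_prime_mulEquiv_pi_zmod [Nontrivial N] [Nontrivial C] (hφ : IsFixedPointFree φ)
    (hN : ∀ n, 0 < n → orderCount N n = 0 ∨ orderCount N n ∣ Nat.card N * Nat.card C) :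
    ∃ p r k, p.Prime ∧ 0 < k ∧ Nat.card C + 1 = p ^ r ∧
      Nonempty (N ≃* (Fin r → Multiplicative (ZMod (p ^ k)))) := by
  obtain ⟨p, hp, hpN⟩ := Nat.exists_prime_and_dvd (Finite.one_lt_card (α := N)).ne'
  have : Fact p.Prime := ⟨hp⟩
  have hNp := hφ.isPGroup hN hpN
  have hcard := hφ.orderCount_eq_natCard hN hpN hNp
  obtain ⟨r, hr⟩ := exists_orderCount_add_one_eq hNp
  obtain ⟨k, hk, hiso⟩ := exists_mulEquiv_of_forall_exists_mulAut hNp hr fun x y hx hy => by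
    obtain ⟨c, hc⟩ := hφ.exists_apply_eq_of_orderCount_eq hp.ne_one hcard hx hy
    exact ⟨φ c, hc⟩
  exact ⟨p, r, k, hp, hk, hcard ▸ hr, hiso⟩

end PerfectOrderClasses

/-! ### The complement -/

section Complement

variable {N C : Type*} [Group C]

lemma isNilpotent_of_isCyclic [Group N] [IsCyclic N] [Nontrivial N] {φ : C →* MulAut N}
    (hφ : IsFixedPointFree φ) : Group.IsNilpotent C := by
  obtain ⟨x, hx⟩ := exists_ne (1 : N)
  let f : C →* (ZMod (Nat.card N))ˣ := (IsCyclic.mulAutMulEquiv N).toMonoidHom.comp φ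
  have hf : Function.Injective f := (IsCyclic.mulAutMulEquiv N).injective.comp
    fun _ _ h => hφ.injective_apply hx (DFunLike.congr_fun h x)
  let _ : CommGroup C := f.commGroupOfInjective hf
  exact CommGroup.isNilpotent

lemma comp [Group N] {φ : C →* MulAut N} (hφ : IsFixedPointFree φ) {D : Type*} [Group D]
    {f : D →* C} (hf : Function.Injective f) : IsFixedPointFree (φ.comp f) :=
  fun d hd => hφ (f d) ((map_ne_one_iff f hf).mpr hd)

variable [CommGroup N] {φ : C →* MulAut N}

lemma mul_mul_eq_one_of_pow_three_eq_one (hφ : IsFixedPointFree φ) {c : C} (hc : c ^ 3 = 1)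
    (hc1 : c ≠ 1) (g : N) : g * φ c g * φ (c ^ 2) g = 1 := by
  by_contra hne
  refine hc1 (hφ.eq_one hne ?_)
  have h3 : φ c (φ (c ^ 2) g) = g := by
    rw [← MulAut.mul_apply, ← map_mul, ← pow_succ', hc, map_one, MulAut.one_apply]
  have h2 : φ c (φ c g) = φ (c ^ 2) g := by
    rw [← MulAut.mul_apply, ← map_mul, ← sq]
  rw [map_mul, map_mul, h2, h3, mul_comm, mul_assoc]

-- In the endomorphism ring of `N`, `(y - x) (y - x²) = y² + y + 1 = 0`, and `y - x` is injective
-- unless `y = x`.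
lemma eq_sq_of_commute [Nontrivial N] (hφ : IsFixedPointFree φ) {x y : C} (hx : x ^ 3 = 1)
    (hx1 : x ≠ 1) (hy : y ^ 3 = 1) (hy1 : y ≠ 1) (hxy : Commute x y) (hne : y ≠ x) :
    y = x ^ 2 := by
  obtain ⟨g, hg⟩ := exists_ne (1 : N)
  refine hφ.injective_apply hg (?_ : φ y g = φ (x ^ 2) g)
  by_contra hw
  refine hne (hφ.injective_apply (div_ne_one.mpr hw) ?_)
  have hyy : φ y (φ y g) = φ (y ^ 2) g := by rw [sq, map_mul, MulAut.mul_apply]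
  have hxx : φ x (φ (x ^ 2) g) = g := by
    rw [← MulAut.mul_apply, ← map_mul, ← pow_succ', hx, map_one, MulAut.one_apply]
  have hyx : φ y (φ (x ^ 2) g) = φ (x ^ 2) (φ y g) := by
    rw [← MulAut.mul_apply, ← MulAut.mul_apply, ← map_mul, ← map_mul, (hxy.pow_left 2).eq]
  have hsumx := hφ.mul_mul_eq_one_of_pow_three_eq_one hx hx1 (φ y g)
  have hsumy := hφ.mul_mul_eq_one_of_pow_three_eq_one hy hy1 g
  change φ y (φ y g / φ (x ^ 2) g) = φ x (φ y g / φ (x ^ 2) g)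
  rw [map_div, map_div, hyy, hxx, hyx, eq_inv_of_mul_eq_one_right hsumx,
    eq_inv_of_mul_eq_one_right hsumy, div_inv_eq_mul, mul_inv, mul_assoc, inv_mul_cancel_left,
    div_eq_mul_inv, mul_comm]

lemma isCyclic_of_natCard_eq_nine [Nontrivial N] (hφ : IsFixedPointFree φ)
    (hC : Nat.card C = 3 ^ 2) : IsCyclic C := by
  have : Fact (Nat.Prime 3) := ⟨Nat.prime_three⟩
  by_contra hcyc
  have hexp := (not_isCyclic_iff_exponent_eq_prime Nat.prime_three hC).mp hcyc
  have hpow (x : C) : x ^ 3 = 1 := by rw [← hexp, Monoid.pow_exponent_eq_one]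
  have hcomm := IsPGroup.isMulCommutative_of_card_eq_prime_sq hC
  have : Finite C := Nat.finite_of_card_ne_zero (by rw [hC]; norm_num)
  have : Nontrivial C := Finite.one_lt_card_iff_nontrivial.mp (by rw [hC]; norm_num)
  obtain ⟨x, hx⟩ := exists_ne (1 : C)
  refine hcyc ⟨x, fun y => ?_⟩
  rcases eq_or_ne y 1 with rfl | hy
  · exact one_mem (Subgroup.zpowers x)
  rcases eq_or_ne y x with rfl | hyx
  · exact Subgroup.mem_zpowers y
  rw [hφ.eq_sq_of_commute (hpow x) hx (hpow y) hy (hcomm.is_comm.comm x y) hyx]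
  exact Subgroup.npow_mem_zpowers x 2

variable [Finite C]

lemma eq_two_and_eq_of_natCard_add_one_eq [Nontrivial N] (hφ : IsFixedPointFree φ)
    (hnil : ¬ Group.IsNilpotent C)
    (hdiv : ∀ q : ℕ, q.Prime → q ∣ Nat.card C → q = 2 ∨ q = 3) {p r k : ℕ} (hp : p.Prime)
    (hcard : Nat.card C + 1 = p ^ r)
    (e : N ≃* (Fin r → Multiplicative (ZMod (p ^ k)))) :
    r = 2 ∧ (p = 5 ∨ p = 7 ∨ p = 17) := by
  have h2 : 2 ∣ Nat.card C :=
    dvd_natCard_of_not_isNilpotent hnil Nat.prime_three fun q hq h => (hdiv q hq h).symm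
  have h3 : 3 ∣ Nat.card C := dvd_natCard_of_not_isNilpotent hnil Nat.prime_two hdiv
  have hC : 0 < Nat.card C := Nat.card_pos
  have hr0 : r ≠ 0 := by
    rintro rfl
    rw [pow_zero] at hcard
    omega
  have hr1 : r ≠ 1 := by
    rintro rfl
    have : IsCyclic N :=
      isCyclic_of_injective (e.trans (MulEquiv.piUnique _)).toMonoidHom (MulEquiv.injective _)
    exact hnil hφ.isNilpotent_of_isCyclic
  have hndvd {q : ℕ} (hq : q.Prime) (hqC : q ∣ Nat.card C) : ¬ q ∣ p := fun h =>
    hq.not_dvd_one ((Nat.dvd_add_right hqC).mp (hcard ▸ dvd_pow h hr0))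
  have hodd : Odd p := Nat.not_even_iff_odd.mp fun h => hndvd Nat.prime_two h2 h.two_dvd
  have hp3 : p ≠ 3 := fun h => hndvd Nat.prime_three h3 (dvd_of_eq h.symm)
  have hp2 : p ≠ 2 := fun h => hndvd Nat.prime_two h2 (dvd_of_eq h.symm)
  refine eq_two_and_eq_of_pow_sub_one_mem_factoredNumbers
    (by have := hp.two_le; omega) hodd (by omega) ?_
  rw [← hcard, Nat.add_sub_cancel, Nat.mem_factoredNumbers']
  exact fun q hq h => by simpa using hdiv q hq h

theorem exists_isoFrobSdp [Finite N] [Nontrivial N] (hφ : IsFixedPointFree φ) {z : C}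
    (hz : orderOf z = 2) (hnil : ¬ Group.IsNilpotent C)
    (hdiv : ∀ p : ℕ, p.Prime → p ∣ Nat.card C → p = 2 ∨ p = 3) {G : Type*} [Group G]
    (e : G ≃* N ⋊[φ] C) (hpoc : PerfectOrderClasses G) :
    ∃ k : ℕ, 0 < k ∧
      (IsoFrobSdp G (Fin 2 → Multiplicative (ZMod (5 ^ k)))
          (Matrix.SpecialLinearGroup (Fin 2) (ZMod 3)) ∨
        IsoFrobSdp G (Fin 2 → Multiplicative (ZMod (5 ^ k))) (Metacyclic 3 8 (-1)) ∨
        IsoFrobSdp G (Fin 2 → Multiplicative (ZMod (7 ^ k))) (Metacyclic 3 16 (-1)) ∨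
        IsoFrobSdp G (Fin 2 → Multiplicative (ZMod (17 ^ k))) (Metacyclic 9 32 (-1))) := by
  obtain ⟨hpocC, hN⟩ := hφ.perfectOrderClasses_semidirectProduct_iff.mp (hpoc.congr e)
  have hz' := hφ.isUniqueInvolution hz
  have : Nontrivial C := ⟨z, 1, hz'.1⟩
  obtain ⟨p, r, k, hp, hk, hcard, ⟨eN⟩⟩ := hφ.exists_prime_mulEquiv_pi_zmod hN
  obtain ⟨rfl, hp⟩ := hφ.eq_two_and_eq_of_natCard_add_one_eq hnil hdiv hp hcard eN
  refine ⟨k, hk, ?_⟩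
  rcases hp with rfl | rfl | rfl
  · obtain ⟨⟨eC⟩⟩ | ⟨⟨eC⟩⟩ :=
      hz'.nonempty_mulEquiv_of_natCard_eq_24 (by omega) hpocC hnil
    · exact .inl (.of_mulEquiv hφ e eN eC)
    · exact .inr (.inl (.of_mulEquiv hφ e eN eC))
  · obtain ⟨eC⟩ := hz'.nonempty_mulEquiv_of_natCard_eq_48 (by omega) hpocC hnil
    exact .inr (.inr (.inl (.of_mulEquiv hφ e eN eC)))
  · obtain ⟨eC⟩ := hz'.nonempty_mulEquiv_of_natCard_eq_288 (by omega) hpocC hnil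
      fun P hP => (hφ.comp P.subtype_injective).isCyclic_of_natCard_eq_nine hP
    exact .inr (.inr (.inr (.of_mulEquiv hφ e eN eC)))

end Complement

end IsFixedPointFree

/-! ### Homocyclic kernels -/

section Homocyclic

variable {p : ℕ} [hp : Fact p.Prime]

lemma orderCount_pi_zmod (r k j : ℕ) :
    orderCount (Fin r → Multiplicative (ZMod (p ^ k))) (p ^ (j + 1)) =
      if j < k then p ^ (j * r) * (p ^ r - 1) else 0 := by
  have : NeZero (p ^ k) := ⟨pow_ne_zero k hp.out.ne_zero⟩
  have hA : Nat.card (Multiplicative (ZMod (p ^ k))) = p ^ k := by simp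
  have h := natCard_pow_prime_pow_succ_eq_one (p := p) (Fin r → Multiplicative (ZMod (p ^ k))) j
  rw [natCard_pi_pow_eq_one, natCard_pi_pow_eq_one, hA, Fintype.card_fin] at h
  split_ifs with hjk
  · rw [Nat.gcd_eq_right (pow_dvd_pow p hjk.le), Nat.gcd_eq_right (pow_dvd_pow p hjk)] at h
    rw [Nat.mul_sub, mul_one, pow_mul, ← mul_pow, ← pow_succ, h, Nat.add_sub_cancel_left]
  · rw [Nat.gcd_eq_left (pow_dvd_pow p (by omega)),
      Nat.gcd_eq_left (pow_dvd_pow p (by omega))] at h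
    exact (Nat.add_eq_left.mp h.symm)

lemma orderCount_pi_zmod_eq_zero_or_dvd (r k n : ℕ) :
    orderCount (Fin r → Multiplicative (ZMod (p ^ k))) n = 0 ∨
      orderCount (Fin r → Multiplicative (ZMod (p ^ k))) n ∣
        Nat.card (Fin r → Multiplicative (ZMod (p ^ k))) * (p ^ r - 1) := by
  have : NeZero (p ^ k) := ⟨pow_ne_zero k hp.out.ne_zero⟩
  have hcard : Nat.card (Fin r → Multiplicative (ZMod (p ^ k))) = p ^ (k * r) := by
    simp [pow_mul]
  by_cases hdvd : n ∣ Nat.card (Fin r → Multiplicative (ZMod (p ^ k)))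
  swap
  · exact .inl (orderCount_eq_zero hdvd)
  obtain ⟨i, -, rfl⟩ := (Nat.dvd_prime_pow hp.out).mp (hcard ▸ hdvd)
  rcases i with _ | j
  · rw [pow_zero, orderCount_one]
    exact .inr (one_dvd _)
  rw [orderCount_pi_zmod, hcard]
  split_ifs with hjk
  · exact .inr (mul_dvd_mul_right (pow_dvd_pow p (Nat.mul_le_mul_right r hjk.le)) _)
  · exact .inl rfl

end Homocyclic

namespace IsoFrobSdp

variable {G : Type*} [Group G] {p k r : ℕ} [hp : Fact p.Prime]

lemma perfectOrderClasses {C : Type*} [Group C] [Finite C]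
    (h : IsoFrobSdp G (Fin r → Multiplicative (ZMod (p ^ k))) C) (hcard : Nat.card C = p ^ r - 1)
    (hC : PerfectOrderClasses C) : PerfectOrderClasses G := by
  have : NeZero (p ^ k) := ⟨pow_ne_zero k hp.out.ne_zero⟩
  obtain ⟨φ, hφ, ⟨e⟩⟩ := h
  refine .congr e.symm ?_
  refine (IsFixedPointFree.perfectOrderClasses_semidirectProduct_iff (φ := φ) hφ).mpr
    ⟨hC, fun n _ => ?_⟩
  rw [hcard]
  exact orderCount_pi_zmod_eq_zero_or_dvd r k n

lemma perfectOrderClasses_of_metacyclic {m l : ℕ}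
    (h : IsoFrobSdp G (Fin r → Multiplicative (ZMod (p ^ k))) (Metacyclic m (2 ^ (l + 2)) (-1)))
    (hm : Odd m) (hcard : m * 2 ^ (l + 2) = p ^ r - 1)
    (hφ : ∀ d ∈ (m * 2 ^ (l + 1)).divisors, d.totient ∣ m * 2 ^ (l + 2)) :
    PerfectOrderClasses G := by
  have : Finite (Metacyclic m (2 ^ (l + 2)) (-1)) :=
    (Metacyclic.finite_and_card_le hm.pos (Nat.two_pow_pos _)).1
  refine h.perfectOrderClasses ?_ (Metacyclic.perfectOrderClasses hm fun d hd => hφ d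
    (Nat.mem_divisors.mpr ⟨hd, (Nat.mul_pos hm.pos (Nat.two_pow_pos _)).ne'⟩))
  rw [← hcard, Metacyclic.card_eq hm.pos (Nat.two_pow_pos _) (even_two.pow_of_ne_zero (by omega))
    (hm.coprime_two_right.pow_right _)]

end IsoFrobSdp

/-- Frobenius groups with a non-nilpotent `{2,3}`-complement and perfect order classes. -/
theorem frobenius_two_three_complement_perfectOrderClasses_iff
    {G : Type*} [Group G] [Fintype G] (K H : Subgroup G)
    (hFrob : IsFrobeniusWith K H)
    (hnotnil : ¬ Group.IsNilpotent H)
    (hdiv : ∀ p : ℕ, p.Prime → p ∣ Nat.card H → p = 2 ∨ p = 3) :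
    PerfectOrderClasses G ↔
      ∃ k : ℕ, 0 < k ∧
        (IsoFrobSdp G (Fin 2 → Multiplicative (ZMod (5 ^ k)))
            (Matrix.SpecialLinearGroup (Fin 2) (ZMod 3)) ∨
          IsoFrobSdp G (Fin 2 → Multiplicative (ZMod (5 ^ k))) (Metacyclic 3 8 (-1)) ∨
          IsoFrobSdp G (Fin 2 → Multiplicative (ZMod (7 ^ k))) (Metacyclic 3 16 (-1)) ∨
          IsoFrobSdp G (Fin 2 → Multiplicative (ZMod (17 ^ k))) (Metacyclic 9 32 (-1))) := by
  constructor
  · obtain ⟨φ, hφ, ⟨e⟩⟩ := hFrob.exists_isFixedPointFree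
    have : Nontrivial K := (Subgroup.nontrivial_iff_ne_bot K).mpr hFrob.1
    obtain ⟨z, hz⟩ := exists_prime_orderOf_dvd_card' 2 <|
      dvd_natCard_of_not_isNilpotent hnotnil Nat.prime_three fun q hq h => (hdiv q hq h).symm
    let _ : CommGroup K := { mul_comm := hφ.mul_comm_of_orderOf_eq_two hz }
    exact IsFixedPointFree.exists_isoFrobSdp hφ hz hnotnil hdiv e
  · have : Fact (Nat.Prime 5) := ⟨by norm_num⟩
    have : Fact (Nat.Prime 7) := ⟨by norm_num⟩
    have : Fact (Nat.Prime 17) := ⟨by norm_num⟩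
    rintro ⟨k, -, h | h | h | h⟩
    · exact h.perfectOrderClasses SLTwoThree.card_eq SLTwoThree.perfectOrderClasses
    · exact h.perfectOrderClasses_of_metacyclic (l := 1) (by decide) (by norm_num) (by decide)
    · exact h.perfectOrderClasses_of_metacyclic (l := 2) (by decide) (by norm_num) (by decide)
    · exact h.perfectOrderClasses_of_metacyclic (l := 3) (by decide) (by norm_num)
        (by decide +kernel)
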